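/- arXiv:2503.04699 — 9 statements merged into one kernel-verified Lean document; each statement's English description precedes it below -/
import Mathlib

section
/- Let α, β be natural numbers and a, b integers such that it is not the case that α = 0, β = 0, a = 1 and b = 1. Let f = 1 + x + x^{-α} y^{b} and g = 1 + y + y^{-β} x^{a} in R, and consider the module maps h_X : R → R × R, u ↦ (f·u, g·u), and h_Z† : R × R → R, (u, v) ↦ g·u + f·v. Then the BB-code chain complex is exact at the middle term: LinearMap.ker h_Z† = LinearMap.range h_X. (That is, every bivariate-bicycle code with toric layout is topological, except the single pathological case (ᾱ, β̄, a, b) = (0, 0, 1, 1).) -/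
noncomputable section

/-- The Laurent polynomial ring `F₂[x^±, y^±]` as a group algebra. -/
abbrev LaurentR : Type := AddMonoidAlgebra (ZMod 2) (ℤ × ℤ)

/-- The monomial `x^i y^j`. -/
def mono (i j : ℤ) : LaurentR := AddMonoidAlgebra.single (i, j) 1

/-- The BB check map `h_X : R → R × R`, `u ↦ (f·u, g·u)`. -/
def hX (f g : LaurentR) : LaurentR →ₗ[LaurentR] LaurentR × LaurentR :=
  (LinearMap.mulLeft LaurentR f).prod (LinearMap.mulLeft LaurentR g)

/-- The BB check map `h_Z† : R × R → R`, `(u, v) ↦ g·u + f·v`. -/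
def hZdag (f g : LaurentR) : LaurentR × LaurentR →ₗ[LaurentR] LaurentR :=
  (LinearMap.mulLeft LaurentR g).coprod (LinearMap.mulLeft LaurentR f)

open Polynomial Polynomial.Bivariate

/-- The sign `-1` or `1`, according to whether the flag is set. -/
def flagSign (neg : Bool) : ℤ := if neg then -1 else 1

/-- The polynomial associated with `1 + x + x^{-k} y^{±n}` after clearing denominators, in the
variables `X = x` (or `X = x⁻¹` if `neg` is set) and `Y = y^{±1}`. -/
def clearedPoly (neg : Bool) (k n : ℕ) : (ZMod 2)[X][Y] :=
  if neg then C (X ^ (k + 1)) * Y ^ n + C (1 + X) else Y ^ n + C (X ^ k * (1 + X))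

theorem prime_one_add_X : Prime (1 + X : (ZMod 2)[X]) := by
  simpa [sub_eq_add_neg, add_comm, CharTwo.neg_eq] using prime_X_sub_C (1 : ZMod 2)

/-- Eisenstein's criterion for a binomial `c Y ^ n + d`. -/
theorem irreducible_binomial_of_eisenstein {A : Type*} [CommRing A] [IsDomain A] {π c d : A}
    (hπ : Prime π) (hcd : IsRelPrime c d) (hc : ¬ π ∣ c) (hd : π ∣ d) (hd2 : ¬ π ^ 2 ∣ d)
    {n : ℕ} (hn : n ≠ 0) : Irreducible (C c * X ^ n + C d : A[X]) := by
  have hc0 : c ≠ 0 := by rintro rfl; exact hc (dvd_zero _)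
  have hdeg : (C c * X ^ n + C d : A[X]).natDegree = n := by
    rw [natDegree_add_C, natDegree_C_mul_X_pow n c hc0]
  have hcoeff0 : (C c * X ^ n + C d : A[X]).coeff 0 = d := by
    simp [coeff_X_pow, hn.symm]
  have hcoeffn : (C c * X ^ n + C d : A[X]).coeff n = c := by
    simp [coeff_C, hn]
  have hE : (C c * X ^ n + C d : A[X]).IsEisensteinAt (Ideal.span {π}) := by
    refine ⟨?_, ?_, ?_⟩
    · rw [leadingCoeff, hdeg, hcoeffn, Ideal.mem_span_singleton]; exact hc
    · intro i hi
      rw [hdeg] at hi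
      rw [Ideal.mem_span_singleton]
      rcases Nat.eq_zero_or_pos i with rfl | hi0
      · rwa [hcoeff0]
      · simp [coeff_X_pow, coeff_C, hi.ne, hi0.ne']
    · rw [hcoeff0, Ideal.span_singleton_pow, Ideal.mem_span_singleton]; exact hd2
  refine hE.irreducible ((Ideal.span_singleton_prime hπ.ne_zero).2 hπ) ?_ (by omega)
  intro r hr
  rw [C_dvd_iff_dvd_coeff] at hr
  exact hcd (hcoeffn ▸ hr n) (hcoeff0 ▸ hr 0)

theorem irreducible_clearedPoly (neg : Bool) (k : ℕ) {n : ℕ} (hn : n ≠ 0) :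
    Irreducible (clearedPoly neg k n) := by
  have hX : ∀ j : ℕ, ¬ (1 + X : (ZMod 2)[X]) ∣ X ^ j := fun j h => by
    have := eval_dvd (x := (1 : ZMod 2)) h
    simp [CharTwo.add_self_eq_zero] at this
  cases neg
  · have := irreducible_binomial_of_eisenstein (c := 1) (d := X ^ k * (1 + X)) prime_one_add_X
      isRelPrime_one_left prime_one_add_X.not_dvd_one (dvd_mul_left _ _) (fun h => hX k (by
        rw [sq] at h
        exact (mul_dvd_mul_iff_right prime_one_add_X.ne_zero).1 h)) hn
    simpa [clearedPoly] using this
  · have hcop : IsRelPrime (X ^ (k + 1)) (1 + X : (ZMod 2)[X]) :=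
      (prime_one_add_X.irreducible.isRelPrime_iff_not_dvd.2 (hX (k + 1))).symm
    have := irreducible_binomial_of_eisenstein prime_one_add_X hcop (hX _) dvd_rfl (fun h => by
        rw [sq] at h
        exact prime_one_add_X.not_dvd_one
          ((mul_dvd_mul_iff_right prime_one_add_X.ne_zero).1 (by simpa using h))) hn
    simpa [clearedPoly] using this

theorem evalEval_clearedPoly (neg : Bool) (k n : ℕ) (x y : ZMod 2) :
    (clearedPoly neg k n).evalEval x y =
      if neg then x ^ (k + 1) * y ^ n + (1 + x) else y ^ n + x ^ k * (1 + x) := by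
  cases neg <;> simp [clearedPoly, evalEval_add, evalEval_mul, evalEval_pow, evalEval_C, evalEval_X]

theorem evalEval_swap (p : (ZMod 2)[X][Y]) (x y : ZMod 2) :
    (swap p).evalEval x y = p.evalEval y x := by
  rw [← coe_aevalAeval_eq_evalEval, ← coe_aevalAeval_eq_evalEval, aevalAeval_swap]

theorem clearedPoly_ne_zero (neg : Bool) (k n : ℕ) : clearedPoly neg k n ≠ 0 := fun h => by
  have := evalEval_clearedPoly neg k n 1 1
  cases neg <;> simp [h, CharTwo.add_self_eq_zero] at this

theorem swap_clearedPoly_false (k n : ℕ) :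
    swap (clearedPoly false k n) = C (X ^ n) + Y ^ k * (1 + Y) := by
  simp [clearedPoly, swap_C, swap_Y]

theorem swap_clearedPoly_true (k n : ℕ) :
    swap (clearedPoly true k n) = Y ^ (k + 1) * C (X ^ n) + (1 + Y) := by
  simp [clearedPoly, swap_C, swap_Y]

theorem eq_one_of_clearedPoly_eq_swap {n m : ℕ} (hm : m ≠ 0)
    (h : clearedPoly false 0 n = swap (clearedPoly false 0 m)) : n = 1 := by
  have h := congrArg (fun p => p.map (evalRingHom (0 : ZMod 2))) h
  rw [swap_clearedPoly_false] at h
  have h : (X ^ n : (ZMod 2)[X]) = X := by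
    simpa [clearedPoly, hm, add_comm] using h
  simpa using congrArg natDegree h

theorem clearedPoly_ne_swap {s t : Bool} {α β n m : ℕ} (hn : n ≠ 0) (hm : m ≠ 0)
    (h : ¬(s = false ∧ t = false ∧ α = 0 ∧ β = 0 ∧ n = 1 ∧ m = 1)) :
    clearedPoly s α n ≠ swap (clearedPoly t β m) := by
  intro heq
  have key : ∀ x y : ZMod 2,
      (if s then x ^ (α + 1) * y ^ n + (1 + x) else y ^ n + x ^ α * (1 + x)) =
      if t then y ^ (β + 1) * x ^ m + (1 + y) else x ^ m + y ^ β * (1 + y) := fun x y => by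
    rw [← evalEval_clearedPoly, heq, evalEval_swap, evalEval_clearedPoly]
  have h01 := key 0 1
  have h10 := key 1 0
  clear key
  cases s <;> cases t <;> rcases eq_or_ne α 0 with rfl | hα <;>
    rcases eq_or_ne β 0 with rfl | hβ <;>
    simp [*, CharTwo.add_self_eq_zero] at h01 h10
  refine h ⟨rfl, rfl, rfl, rfl, eq_one_of_clearedPoly_eq_swap hm heq,
    eq_one_of_clearedPoly_eq_swap hn ?_⟩
  rw [heq, swap_swap_apply]

theorem coeff_swap_clearedPoly_false (k n : ℕ) :
    (swap (clearedPoly false k n)).coeff (k + 1) = 1 := by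
  rw [swap_clearedPoly_false, mul_one_add, ← pow_succ, coeff_add, coeff_add, coeff_C_succ]
  simp [coeff_X_pow]

theorem exists_clearedPoly_zero_eq_C (neg : Bool) (k : ℕ) :
    ∃ q : (ZMod 2)[X], clearedPoly neg k 0 = C q := by
  cases neg
  · exact ⟨1 + X ^ k * (1 + X), by simp [clearedPoly]⟩
  · exact ⟨X ^ (k + 1) + (1 + X), by simp [clearedPoly]⟩

theorem not_clearedPoly_dvd_swap (t : Bool) (α β n : ℕ) :
    ¬ clearedPoly false α n ∣ swap (clearedPoly t β 0) := by
  intro hdvd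
  have h := (map_dvd_iff (swap (R := ZMod 2))).2 hdvd
  rw [swap_swap_apply] at h
  have hle := natDegree_le_of_dvd h (clearedPoly_ne_zero t β 0)
  obtain ⟨q, hq⟩ := exists_clearedPoly_zero_eq_C t β
  rw [hq, natDegree_C] at hle
  have hcoeff := coeff_swap_clearedPoly_false α n
  rw [coeff_eq_zero_of_natDegree_lt (by omega)] at hcoeff
  exact zero_ne_one hcoeff

theorem IsRelPrime.map_swap {p q : (ZMod 2)[X][Y]} (h : IsRelPrime p q) :
    IsRelPrime (swap p) (swap q) := by
  intro d hp hq
  have hp := (map_dvd_iff (swap (R := ZMod 2))).2 hp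
  have hq := (map_dvd_iff (swap (R := ZMod 2))).2 hq
  rw [swap_swap_apply] at hp hq
  exact (MulEquiv.isUnit_map swap).1 (h hp hq)

theorem isRelPrime_clearedPoly_swap_of_ne_zero {s t : Bool} {α β n m : ℕ}
    (hs : s = true → m ≠ 0) (hn : n ≠ 0)
    (h : ¬(s = false ∧ t = false ∧ α = 0 ∧ β = 0 ∧ n = 1 ∧ m = 1)) :
    IsRelPrime (clearedPoly s α n) (swap (clearedPoly t β m)) := by
  have hP := irreducible_clearedPoly s α hn
  rw [hP.isRelPrime_iff_not_dvd]
  rcases eq_or_ne m 0 with rfl | hm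
  · obtain rfl : s = false := by simpa using hs
    exact not_clearedPoly_dvd_swap t α β n
  · intro hdvd
    have hQ : Irreducible (swap (clearedPoly t β m)) :=
      (MulEquiv.irreducible_iff swap).2 (irreducible_clearedPoly t β hm)
    refine clearedPoly_ne_swap hn hm h ?_
    obtain ⟨u, hu⟩ := (hP.dvd_irreducible_iff_associated hQ).1 hdvd
    obtain ⟨r, hr, hru⟩ := Polynomial.isUnit_iff.1 u.isUnit
    obtain ⟨c, hc, hcr⟩ := Polynomial.isUnit_iff.1 hr
    have hc1 : c = 1 := by
      have := hc.ne_zero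
      clear hcr hc
      revert c
      decide
    rw [← hu, ← hru, ← hcr, hc1]
    simp

theorem isRelPrime_clearedPoly_swap {s t : Bool} {α β n m : ℕ} (hs : s = true → m ≠ 0)
    (ht : t = true → n ≠ 0)
    (h : ¬(s = false ∧ t = false ∧ α = 0 ∧ β = 0 ∧ n = 1 ∧ m = 1)) :
    IsRelPrime (clearedPoly s α n) (swap (clearedPoly t β m)) := by
  rcases eq_or_ne n 0 with rfl | hn
  · rcases eq_or_ne m 0 with rfl | hm
    · obtain rfl : t = false := by simpa using ht
      obtain ⟨q, hq⟩ := exists_clearedPoly_zero_eq_C s α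
      intro d hd hd'
      rw [hq] at hd
      have hC0 : (C q : (ZMod 2)[X][Y]) ≠ 0 := hq ▸ clearedPoly_ne_zero s α 0
      have hdeg := natDegree_le_of_dvd hd hC0
      rw [natDegree_C] at hdeg
      rw [eq_C_of_natDegree_le_zero hdeg] at hd' ⊢
      rw [C_dvd_iff_dvd_coeff] at hd'
      have h1 := hd' (β + 1)
      rw [coeff_swap_clearedPoly_false] at h1
      exact (isUnit_of_dvd_one h1).map C
    · have := (isRelPrime_clearedPoly_swap_of_ne_zero (s := t) (t := s) (α := β) (β := α)
        (n := m) (m := 0) ht hm (by simp)).symm.map_swap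
      rwa [swap_swap_apply] at this
  · exact isRelPrime_clearedPoly_swap_of_ne_zero hs hn h

theorem mono_mul_mono (i j k l : ℤ) : mono i j * mono k l = mono (i + k) (j + l) := by
  simp [mono, AddMonoidAlgebra.single_mul_single]

theorem mono_zero_zero : mono 0 0 = 1 := rfl

theorem mono_pow (i j : ℤ) (n : ℕ) : mono i j ^ n = mono (n * i) (n * j) := by
  simp [mono, AddMonoidAlgebra.single_pow]

theorem isUnit_mono (i j : ℤ) : IsUnit (mono i j) :=
  IsUnit.of_mul_eq_one (mono (-i) (-j)) (by simp [mono_mul_mono, mono_zero_zero])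

/-- The algebra homomorphism `F₂[X][Y] → F₂[x^±, y^±]` sending `X` to `x^{±1}` and `Y` to
`y^{±1}`, with the signs given by the flags. -/
def laurentHom (s t : Bool) : (ZMod 2)[X][Y] →ₐ[ZMod 2] LaurentR :=
  aevalAeval (mono (flagSign s) 0) (mono 0 (flagSign t))

theorem laurentHom_X (s t : Bool) : laurentHom s t (C X) = mono (flagSign s) 0 :=
  aevalAeval_X _ _

theorem laurentHom_Y (s t : Bool) : laurentHom s t Y = mono 0 (flagSign t) :=
  aevalAeval_Y _ _

theorem laurentHom_C_C (s t : Bool) (c : ZMod 2) :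
    laurentHom s t (C (C c)) = AddMonoidAlgebra.single 0 c :=
  (laurentHom s t).commutes c

theorem laurentHom_monomial (s t : Bool) (i j : ℕ) (c : ZMod 2) :
    laurentHom s t (monomial j (monomial i c)) =
      AddMonoidAlgebra.single (i * flagSign s, j * flagSign t) c := by
  rw [← C_mul_X_pow_eq_monomial, ← C_mul_X_pow_eq_monomial, C_mul, C_pow, map_mul, map_mul,
    map_pow, map_pow, laurentHom_X, laurentHom_Y, laurentHom_C_C, mono_pow, mono_pow]
  simp [mono, AddMonoidAlgebra.single_mul_single]

theorem flagSign_ne_zero (s : Bool) : flagSign s ≠ 0 := by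
  cases s <;> decide

theorem coeff_laurentHom (s t : Bool) (p : (ZMod 2)[X][Y]) (i j : ℕ) :
    (laurentHom s t p).coeff (i * flagSign s, j * flagSign t) = (p.coeff j).coeff i := by
  induction p using Polynomial.induction_on' with
  | add p q hp hq => simp [hp, hq]
  | monomial k r =>
    induction r using Polynomial.induction_on' with
    | add p q hp hq => rw [map_add, map_add, coeff_add, coeff_add, ← hp, ← hq]; simp
    | monomial l c =>
      rw [laurentHom_monomial, AddMonoidAlgebra.coeff_single, Finsupp.single_apply]
      by_cases hk : k = j <;> by_cases hl : l = i <;>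
        simp [coeff_monomial, hk, hl, flagSign_ne_zero]

theorem laurentHom_injective (s t : Bool) : Function.Injective (laurentHom s t) := by
  intro p q h
  ext j i
  rw [← coeff_laurentHom s t, h, coeff_laurentHom]

theorem exists_laurentHom_eq_mul (s t : Bool) (u : LaurentR) :
    ∃ i j : ℕ, ∃ p, laurentHom s t p = laurentHom s t (C X ^ i * Y ^ j) * u := by
  induction u using AddMonoidAlgebra.induction_linear with
  | zero => exact ⟨0, 0, 0, by simp⟩
  | add u v hu hv =>
    obtain ⟨i, j, p, hp⟩ := hu
    obtain ⟨k, l, q, hq⟩ := hv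
    refine ⟨i + k, j + l, C X ^ k * Y ^ l * p + C X ^ i * Y ^ j * q, ?_⟩
    rw [map_add, map_mul, map_mul _ _ q, hp, hq, pow_add, pow_add]
    simp only [map_mul]
    ring
  | single m c =>
    obtain ⟨x, y⟩ := m
    refine ⟨x.natAbs, y.natAbs, monomial (y.natAbs + y * flagSign t).toNat
      (monomial (x.natAbs + x * flagSign s).toNat c), ?_⟩
    have aux : ∀ (z : ℤ) (r : Bool), ((z.natAbs + z * flagSign r).toNat : ℤ) * flagSign r =
        z.natAbs * flagSign r + z := by
      intro z r
      cases r <;> simp only [flagSign, Bool.false_eq_true, if_true, if_false] <;> omega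
    rw [laurentHom_monomial, map_mul, map_pow, map_pow, laurentHom_X, laurentHom_Y, mono_pow,
      mono_pow, mono_mul_mono, mono, AddMonoidAlgebra.single_mul_single, aux, aux]
    simp

theorem isUnit_laurentHom_monomial (s t : Bool) (i j : ℕ) :
    IsUnit (laurentHom s t (C X ^ i * Y ^ j)) := by
  rw [map_mul, map_pow, map_pow, laurentHom_X, laurentHom_Y]
  exact ((isUnit_mono _ _).pow i).mul ((isUnit_mono _ _).pow j)

theorem laurentHom_dvd_of_dvd_mul {s t : Bool} {P Q : (ZMod 2)[X][Y]} (hPQ : IsRelPrime P Q)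
    {u : LaurentR} (h : laurentHom s t P ∣ laurentHom s t Q * u) : laurentHom s t P ∣ u := by
  obtain ⟨v, hv⟩ := h
  obtain ⟨i, j, U, hU⟩ := exists_laurentHom_eq_mul s t u
  obtain ⟨k, l, V, hV⟩ := exists_laurentHom_eq_mul s t v
  have hdvd : P ∣ Q * (C X ^ k * Y ^ l * U) := by
    refine ⟨C X ^ i * Y ^ j * V, laurentHom_injective s t ?_⟩
    rw [map_mul, map_mul _ _ U, map_mul _ P, map_mul _ _ V, hU, hV]
    linear_combination
      laurentHom s t (C X ^ k * Y ^ l) * laurentHom s t (C X ^ i * Y ^ j) * hv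
  have := map_dvd (laurentHom s t) (hPQ.dvd_of_dvd_mul_left hdvd)
  rwa [map_mul, hU, (isUnit_laurentHom_monomial s t k l).dvd_mul_left,
    (isUnit_laurentHom_monomial s t i j).dvd_mul_left] at this

theorem associated_laurentHom_clearedPoly (s t : Bool) (k n : ℕ) :
    Associated (1 + mono 1 0 + mono (-(k : ℤ)) (n * flagSign t))
      (laurentHom s t (clearedPoly s k n)) := by
  cases s
  · obtain ⟨w, hw⟩ := isUnit_mono k 0
    refine ⟨w, ?_⟩
    rw [hw]
    simp only [clearedPoly, map_add, map_mul, map_pow, map_one, laurentHom_X, laurentHom_Y,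
      mono_pow, ← mono_zero_zero, mul_add, add_mul, mono_mul_mono, flagSign,
      Bool.false_eq_true, if_false]
    simp
    ring_nf
  · obtain ⟨w, hw⟩ := isUnit_mono (-1) 0
    refine ⟨w, ?_⟩
    rw [hw]
    simp only [clearedPoly, map_add, map_mul, map_pow, map_one, laurentHom_X, laurentHom_Y,
      mono_pow, ← mono_zero_zero, add_mul, mono_mul_mono, flagSign, if_true]
    simp
    ring_nf

theorem associated_laurentHom_swap_clearedPoly (s t : Bool) (k n : ℕ) :
    Associated (1 + mono 0 1 + mono (n * flagSign s) (-(k : ℤ)))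
      (laurentHom s t (swap (clearedPoly t k n))) := by
  cases t
  · obtain ⟨w, hw⟩ := isUnit_mono 0 k
    refine ⟨w, ?_⟩
    rw [hw, swap_clearedPoly_false]
    simp only [map_add, map_mul, map_pow, map_one, laurentHom_X, laurentHom_Y,
      mono_pow, ← mono_zero_zero, mul_add, add_mul, mono_mul_mono, flagSign,
      Bool.false_eq_true, if_false]
    simp
    ring_nf
  · obtain ⟨w, hw⟩ := isUnit_mono 0 (-1)
    refine ⟨w, ?_⟩
    rw [hw, swap_clearedPoly_true]
    simp only [map_add, map_mul, map_pow, map_one, laurentHom_X, laurentHom_Y,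
      mono_pow, ← mono_zero_zero, add_mul, mono_mul_mono, flagSign, if_true]
    simp
    ring_nf

theorem exists_natCast_mul_flagSign (z : ℤ) :
    ∃ (s : Bool) (n : ℕ), z = n * flagSign s ∧ (s = true → n ≠ 0) := by
  rcases le_or_gt 0 z with h | h
  · exact ⟨false, z.toNat, by simp [flagSign, h], by simp⟩
  · exact ⟨true, z.natAbs, by simp only [flagSign, if_true]; omega, by omega⟩

/-- Every BB code with the toric layout is topological, except the single pathological
case `(ᾱ, β̄, a, b) = (0, 0, 1, 1)`: the chain complex `R → R² → R` is exact in the middle. -/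
theorem bb_code_topological (α β : ℕ) (a b : ℤ)
    (hpath : ¬(α = 0 ∧ β = 0 ∧ a = 1 ∧ b = 1)) :
    LinearMap.ker (hZdag (1 + mono 1 0 + mono (-(α : ℤ)) b) (1 + mono 0 1 + mono a (-(β : ℤ)))) =
    LinearMap.range (hX (1 + mono 1 0 + mono (-(α : ℤ)) b) (1 + mono 0 1 + mono a (-(β : ℤ)))) := by
  obtain ⟨s, m, rfl, hs⟩ := exists_natCast_mul_flagSign a
  obtain ⟨t, n, rfl, ht⟩ := exists_natCast_mul_flagSign b
  have hrel : IsRelPrime (clearedPoly s α n) (swap (clearedPoly t β m)) := by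
    refine isRelPrime_clearedPoly_swap hs ht ?_
    rintro ⟨rfl, rfl, hα, hβ, rfl, rfl⟩
    exact hpath ⟨hα, hβ, rfl, rfl⟩
  have hf := associated_laurentHom_clearedPoly s t α n
  have hg := associated_laurentHom_swap_clearedPoly s t β m
  have hP0 : laurentHom s t (clearedPoly s α n) ≠ 0 :=
    (map_ne_zero_iff _ (laurentHom_injective s t)).2 (clearedPoly_ne_zero s α n)
  have hf0 := hf.symm.ne_zero_iff.1 hP0
  generalize 1 + mono 1 0 + mono (-(α : ℤ)) (n * flagSign t) = f at hf hf0 ⊢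
  generalize 1 + mono 0 1 + mono (m * flagSign s) (-(β : ℤ)) = g at hg ⊢
  have : CharP LaurentR 2 := charP_of_injective_algebraMap' (ZMod 2) 2
  ext ⟨u, v⟩
  simp only [LinearMap.mem_ker, LinearMap.mem_range, hZdag, hX, LinearMap.coprod_apply,
    LinearMap.mulLeft_apply, LinearMap.prod_apply, Function.prod_apply, Prod.mk.injEq]
  constructor
  · intro h
    have h := CharTwo.add_eq_zero.1 h
    have hdvd : laurentHom s t (clearedPoly s α n) ∣
        laurentHom s t (swap (clearedPoly t β m)) * u :=
      (hf.dvd_iff_dvd_left).1 (((hg.mul_right u).dvd_iff_dvd_right).1 ⟨v, h⟩)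
    obtain ⟨w, rfl⟩ := hf.dvd_iff_dvd_left.2 (laurentHom_dvd_of_dvd_mul hrel hdvd)
    exact ⟨w, rfl, mul_left_cancel₀ hf0 (by rw [← h, mul_left_comm])⟩
  · rintro ⟨w, rfl, rfl⟩
    rw [mul_left_comm]
    exact CharTwo.add_self_eq_zero _
end
end

section
/- For the pathological parameter choice α = β = 0, a = b = 1, so that f = g = 1 + x + y in R, the BB-code chain complex fails to be exact at the middle term: for h_X : R → R × R, u ↦ (f·u, g·u), and h_Z† : R × R → R, (u, v) ↦ g·u + f·v, one has LinearMap.range h_X ≠ LinearMap.ker h_Z† (indeed the pair (1, 1) lies in the kernel of h_Z† but not in the range of h_X). -/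
noncomputable section

/-- Evaluation of Laurent polynomials at a pair of nonzero elements of a field of
characteristic two. -/
def evalLaurent {K : Type*} [Field K] [Algebra (ZMod 2) K] (a b : K) (ha : a ≠ 0) (hb : b ≠ 0) :
    LaurentR →ₐ[ZMod 2] K :=
  AddMonoidAlgebra.lift (ZMod 2) K (ℤ × ℤ)
    { toFun := fun p => a ^ p.toAdd.1 * b ^ p.toAdd.2
      map_one' := by simp
      map_mul' := fun p q => by
        simp only [toAdd_mul, Prod.fst_add, Prod.snd_add, zpow_add₀ ha, zpow_add₀ hb]
        ring }

theorem evalLaurent_mono {K : Type*} [Field K] [Algebra (ZMod 2) K] (a b : K) (ha : a ≠ 0)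
    (hb : b ≠ 0) (i j : ℤ) : evalLaurent a b ha hb (mono i j) = a ^ i * b ^ j := by
  simp [evalLaurent, mono]

/-- `1 + x + y` is not a unit: it vanishes at the point `(t, 1 + t)` over `F₂(t)`. -/
theorem one_add_x_add_y_mul_ne_one (u : LaurentR) : (1 + mono 1 0 + mono 0 1) * u ≠ 1 := by
  intro hu
  have hX : (RatFunc.X : RatFunc (ZMod 2)) ≠ 0 := RatFunc.X_ne_zero
  have hY : (1 + RatFunc.X : RatFunc (ZMod 2)) ≠ 0 := by
    have h : (1 + Polynomial.X : Polynomial (ZMod 2)) ≠ 0 := by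
      rw [add_comm]
      exact Polynomial.X_add_C_ne_zero 1
    simpa using RatFunc.algebraMap_ne_zero h
  have h := congrArg (evalLaurent _ _ hX hY) hu
  have : CharP (RatFunc (ZMod 2)) 2 := charP_of_injective_algebraMap' (ZMod 2) 2
  simp [evalLaurent_mono, CharTwo.add_self_eq_zero] at h

/-- For the pathological choice `f = g = 1 + x + y`, the BB chain complex fails to be exact at
the middle term: the pair `(1, 1)` lies in the kernel of `h_Z†` but not in the range of `h_X`. -/
theorem bb_code_pathological_not_exact :
    LinearMap.range (hX (1 + mono 1 0 + mono 0 1) (1 + mono 1 0 + mono 0 1)) ≠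
      LinearMap.ker (hZdag (1 + mono 1 0 + mono 0 1) (1 + mono 1 0 + mono 0 1)) ∧
    ((1 : LaurentR), (1 : LaurentR)) ∈
      LinearMap.ker (hZdag (1 + mono 1 0 + mono 0 1) (1 + mono 1 0 + mono 0 1)) ∧
    ((1 : LaurentR), (1 : LaurentR)) ∉
      LinearMap.range (hX (1 + mono 1 0 + mono 0 1) (1 + mono 1 0 + mono 0 1)) := by
  have hker : ((1 : LaurentR), (1 : LaurentR)) ∈
      LinearMap.ker (hZdag (1 + mono 1 0 + mono 0 1) (1 + mono 1 0 + mono 0 1)) := by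
    have : CharP LaurentR 2 := charP_of_injective_algebraMap' (ZMod 2) 2
    rw [LinearMap.mem_ker]
    exact CharTwo.add_self_eq_zero _
  have hrange : ((1 : LaurentR), (1 : LaurentR)) ∉
      LinearMap.range (hX (1 + mono 1 0 + mono 0 1) (1 + mono 1 0 + mono 0 1)) := by
    rintro ⟨u, hu⟩
    exact one_add_x_add_y_mul_ne_one u (congrArg Prod.fst hu)
  exact ⟨fun h => hrange (h ▸ hker), hker, hrange⟩
end
end

section
/- For every integer α and every nonzero integer b, the three-term Laurent polynomial f = 1 + x + x^{-α} y^{b} is irreducible in R, the two-variable Laurent polynomial ring over F₂. (This is the irreducibility of the bivariate-bicycle generating polynomials with toric layout, proved via a generalized Eisenstein criterion at the prime ideal (x + 1) of F₂[x^{±1}].) -/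
noncomputable section

open scoped LaurentPolynomial

/-- An irreducible polynomial not divisible by `X` stays irreducible as a Laurent polynomial. -/
theorem Polynomial.irreducible_toLaurent {R : Type*} [CommRing R] [IsDomain R]
    {g : Polynomial R} (hg : Irreducible g) (h0 : g.coeff 0 ≠ 0) :
    Irreducible (Polynomial.toLaurent g) := by
  have hX : ¬ Polynomial.X ∣ g := fun h => h0 (Polynomial.X_dvd_iff.1 h)
  constructor
  · intro hu
    obtain ⟨c, hc⟩ := hu.exists_right_inv
    obtain ⟨m, c', hc'⟩ := LaurentPolynomial.exists_T_pow c
    have hgc : g * c' = Polynomial.X ^ m := by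
      apply Polynomial.toLaurent_injective
      rw [map_mul, hc', ← mul_assoc, hc, one_mul, Polynomial.toLaurent_X_pow]
    obtain ⟨i, -, hi⟩ := (dvd_prime_pow Polynomial.prime_X m).1 (Dvd.intro _ hgc)
    rcases i with _ | i
    · exact hg.not_isUnit (by simpa [associated_one_iff_isUnit] using hi)
    · exact hX ((dvd_pow_self _ i.succ_ne_zero).trans hi.symm.dvd)
  · intro a b hab
    obtain ⟨m, a', ha⟩ := LaurentPolynomial.exists_T_pow a
    obtain ⟨k, b', hb⟩ := LaurentPolynomial.exists_T_pow b
    have hmul : a' * b' = g * Polynomial.X ^ (m + k) := by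
      apply Polynomial.toLaurent_injective
      rw [map_mul, map_mul, ha, hb, hab, Polynomial.toLaurent_X_pow, Nat.cast_add,
        LaurentPolynomial.T_add]
      ring
    obtain ⟨i, j, u, v, -, huv, rfl, rfl⟩ := mul_eq_mul_prime_pow Polynomial.prime_X hmul
    have isUnit_of {w : Polynomial R} {c : R[T;T⁻¹]} {l n : ℕ} (hw : IsUnit w)
        (h : Polynomial.toLaurent (w * Polynomial.X ^ l) = c * LaurentPolynomial.T n) :
        IsUnit c := by
      refine isUnit_of_mul_isUnit_left (y := LaurentPolynomial.T n) ?_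
      rw [← h, map_mul, Polynomial.toLaurent_X_pow]
      exact (hw.map _).mul (LaurentPolynomial.isUnit_T _)
    exact (hg.isUnit_or_isUnit huv).imp (isUnit_of · ha) (isUnit_of · hb)

/-- The unit `1 + ε` of the dual numbers. -/
def DualNumber.oneAddEps (K : Type*) [CommRing K] : (DualNumber K)ˣ where
  val := 1 + DualNumber.eps
  inv := 1 - DualNumber.eps
  val_inv := by linear_combination -DualNumber.eps_mul_eps (R := K)
  inv_val := by linear_combination -DualNumber.eps_mul_eps (R := K)

open LaurentPolynomial in
/-- Eisenstein's criterion at the prime `(T + 1)` of `F₂[T;T⁻¹]`. -/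
theorem irreducible_C_one_add_T_add_C_T_mul_X_pow (a : ℤ) {n : ℕ} (hn : n ≠ 0) :
    Irreducible (Polynomial.C (1 + T 1) + Polynomial.C (T a) * Polynomial.X ^ n :
      Polynomial (ZMod 2)[T;T⁻¹]) := by
  -- `φ` sends a Laurent polynomial to its first order Taylor expansion at `T = 1`.
  let φ : (ZMod 2)[T;T⁻¹] →+* DualNumber (ZMod 2) :=
    eval₂ (algebraMap _ _) (DualNumber.oneAddEps (ZMod 2))
  let ψ : (ZMod 2)[T;T⁻¹] →+* ZMod 2 :=
    (TrivSqZeroExt.fstHom (ZMod 2) (ZMod 2) (ZMod 2)).toRingHom.comp φ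
  have hφT : φ (1 + T 1) = DualNumber.eps := by
    have h2 : (1 + 1 : DualNumber (ZMod 2)) = 0 := by
      ext <;> simp
      decide
    rw [map_add, map_one, eval₂_T, zpow_one, DualNumber.oneAddEps, ← add_assoc, h2, zero_add]
  have hmem : (1 + T 1 : (ZMod 2)[T;T⁻¹]) ∈ RingHom.ker ψ := by
    simp [RingHom.mem_ker, ψ, hφT]
  have hsq : RingHom.ker ψ ^ 2 ≤ RingHom.ker φ := by
    rw [pow_two, Ideal.mul_le]
    intro r hr s hs
    have hr : (φ r).fst = 0 := hr
    have hs : (φ s).fst = 0 := hs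
    rw [RingHom.mem_ker, map_mul]
    ext <;> simp [hr, hs]
  have hnotMem : (1 + T 1 : (ZMod 2)[T;T⁻¹]) ∉ RingHom.ker ψ ^ 2 := by
    intro h
    have := hsq h
    rw [RingHom.mem_ker, hφT] at this
    simpa using congrArg TrivSqZeroExt.snd this
  have hprime : (RingHom.ker ψ).IsPrime := RingHom.ker_isPrime ψ
  set g : Polynomial (ZMod 2)[T;T⁻¹] :=
    Polynomial.C (1 + T 1) + Polynomial.C (T a) * Polynomial.X ^ n with hg
  have hT : (T a : (ZMod 2)[T;T⁻¹]) ≠ 0 := (isUnit_T a).ne_zero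
  have hdeg : g.degree = n := by
    rw [hg, add_comm, Polynomial.degree_add_C, Polynomial.degree_C_mul_X_pow n hT]
    rw [Polynomial.degree_C_mul_X_pow n hT]
    exact_mod_cast Nat.pos_of_ne_zero hn
  have hnat : g.natDegree = n := Polynomial.natDegree_eq_of_degree_eq_some hdeg
  have hcoeff : g.coeff n = T a := by
    simp [hg, Polynomial.coeff_one, Polynomial.coeff_C, hn]
  have hlead : g.leadingCoeff = T a := by rw [Polynomial.leadingCoeff, hnat, hcoeff]
  refine Polynomial.irreducible_of_eisenstein_criterion hprime ?_ ?_ ?_ ?_ ?_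
  · rw [hlead]
    exact fun h => hprime.ne_top (Ideal.eq_top_of_isUnit_mem _ h (isUnit_T a))
  · intro k hk
    rw [hdeg] at hk
    have hk : k < n := by exact_mod_cast hk
    rcases eq_or_ne k 0 with rfl | hk0
    · simpa [hg, Polynomial.coeff_X_pow, hk.ne] using hmem
    · simp [hg, Polynomial.coeff_one, Polynomial.coeff_C, hk0, Polynomial.coeff_X_pow, hk.ne]
  · rw [hdeg]
    exact_mod_cast Nat.pos_of_ne_zero hn
  · simpa [hg, Polynomial.coeff_X_pow, hn.symm] using hnotMem
  · intro r hr
    have := (Polynomial.C_dvd_iff_dvd_coeff r g).1 hr n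
    rw [hcoeff] at this
    exact isUnit_of_dvd_unit this (isUnit_T a)

open LaurentPolynomial in
theorem irreducible_C_one_add_T_add_C_T_mul_T (a : ℤ) {b : ℤ} (hb : b ≠ 0) :
    Irreducible (C (1 + T 1) + C (T a) * T b : (ZMod 2)[T;T⁻¹][T;T⁻¹]) := by
  have natCast_case {n : ℕ} (hn : n ≠ 0) :
      Irreducible (C (1 + T 1) + C (T a) * T n : (ZMod 2)[T;T⁻¹][T;T⁻¹]) := by
    have h := Polynomial.irreducible_toLaurent
      (irreducible_C_one_add_T_add_C_T_mul_X_pow a hn) ?_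
    · rwa [map_add, Polynomial.toLaurent_C, Polynomial.toLaurent_C_mul_X_pow] at h
    · intro h
      have := congrArg (fun p : (ZMod 2)[T;T⁻¹] => p.coeff 0) h
      simp [Polynomial.coeff_X_pow, hn.symm, ← T_zero] at this
  obtain ⟨n, rfl | rfl⟩ := b.eq_nat_or_neg
  · exact natCast_case (by exact_mod_cast hb)
  · rw [← MulEquiv.irreducible_iff (invert (R := (ZMod 2)[T;T⁻¹]))]
    simpa only [map_add, map_mul, invert_C, invert_T, neg_neg] using
      natCast_case (n := n) (by simpa using hb)

/-- For every integer `α` and every nonzero integer `b`, the three-term Laurent polynomial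
`f = 1 + x + x^{-α} y^{b}` is irreducible in the two-variable Laurent polynomial ring over `F₂`. -/
theorem bb_polynomial_irreducible (α b : ℤ) (hb : b ≠ 0) :
    Irreducible (1 + mono 1 0 + mono (-α) b) := by
  let e : LaurentR ≃+* (ZMod 2)[T;T⁻¹][T;T⁻¹] :=
    (AddMonoidAlgebra.domCongr (ZMod 2) (ZMod 2)
      (AddEquiv.prodComm (M := ℤ) (N := ℤ))).toRingEquiv.trans AddMonoidAlgebra.curryRingEquiv
  have he (i j : ℤ) : e (mono i j) =
      LaurentPolynomial.C (LaurentPolynomial.T i) * LaurentPolynomial.T j := by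
    rw [← LaurentPolynomial.single_eq_C_mul_T]
    simp [e, mono, LaurentPolynomial.T, -LaurentPolynomial.single_eq_C_mul_T]
  rw [← MulEquiv.irreducible_iff e, map_add, map_add, map_one, he, he, LaurentPolynomial.T_zero,
    mul_one, ← map_one LaurentPolynomial.C, ← map_add]
  exact irreducible_C_one_add_T_add_C_T_mul_T (-α) hb
end
end

section
/- Let f, g ∈ R and let ℓ₀, m₀, ℓ, m be positive integers such that x^{ℓ₀} − 1 ∈ Ideal.span {f, g} and y^{m₀} − 1 ∈ Ideal.span {f, g}. Then dim_{F₂} R ⧸ (f, g, x^{ℓ} − 1, y^{m} − 1) = dim_{F₂} R ⧸ (f, g, x^{gcd(ℓ, ℓ₀)} − 1, y^{gcd(m, m₀)} − 1). In particular, the logical-qubit count k(ℓ, m) = 2·dim_{F₂} R ⧸ (f, g, x^{ℓ} − 1, y^{m} − 1) of a BB code on an ℓ × m torus satisfies k(ℓ, m) = k(gcd(ℓ, ℓ₀), gcd(m, m₀)), where ℓ₀ and m₀ are the anyon periods in the x and y directions. -/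
noncomputable section

theorem mono_natCast_zero (n : ℕ) : mono (n : ℤ) 0 = mono 1 0 ^ n := by
  simp [mono, AddMonoidAlgebra.single_pow]

theorem mono_zero_natCast (n : ℕ) : mono 0 (n : ℤ) = mono 0 1 ^ n := by
  simp [mono, AddMonoidAlgebra.single_pow]

theorem Ideal.pow_sub_one_mem_iff {A : Type*} [CommRing A] (I : Ideal A) (u : A) (n : ℕ) :
    u ^ n - 1 ∈ I ↔ Ideal.Quotient.mk I u ^ n = 1 := by
  rw [← map_pow, ← map_one (Ideal.Quotient.mk I), Ideal.Quotient.mk_eq_mk_iff_sub_mem]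

theorem Ideal.pow_gcd_sub_one_mem {A : Type*} [CommRing A] {I : Ideal A} {u : A} {a b : ℕ}
    (ha : u ^ a - 1 ∈ I) (hb : u ^ b - 1 ∈ I) : u ^ Nat.gcd a b - 1 ∈ I := by
  rw [Ideal.pow_sub_one_mem_iff] at *
  exact pow_gcd_eq_one.2 ⟨ha, hb⟩

theorem Ideal.pow_sub_one_mem_of_dvd {A : Type*} [CommRing A] {I : Ideal A} {u : A} {a b : ℕ}
    (hab : a ∣ b) (ha : u ^ a - 1 ∈ I) : u ^ b - 1 ∈ I := by
  rw [Ideal.pow_sub_one_mem_iff] at *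
  exact orderOf_dvd_iff_pow_eq_one.1 ((orderOf_dvd_of_pow_eq_one ha).trans hab)

/-- If `u ^ a₀ - 1` and `v ^ b₀ - 1` lie in `(f, g)`, then the exponents `a`, `b` in
`(f, g, u ^ a - 1, v ^ b - 1)` may be replaced by their gcds with `a₀`, `b₀`. -/
theorem Ideal.span_pow_sub_one_eq_span_pow_gcd_sub_one {A : Type*} [CommRing A]
    {f g u v : A} {a₀ b₀ : ℕ} (a b : ℕ)
    (hu : u ^ a₀ - 1 ∈ Ideal.span {f, g}) (hv : v ^ b₀ - 1 ∈ Ideal.span {f, g}) :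
    Ideal.span {f, g, u ^ a - 1, v ^ b - 1} =
      Ideal.span {f, g, u ^ Nat.gcd a a₀ - 1, v ^ Nat.gcd b b₀ - 1} := by
  have hle (p q : A) : Ideal.span {f, g} ≤ Ideal.span {f, g, p, q} :=
    Ideal.span_mono (by grind)
  have hmem (p q r : A) (hr : r ∈ ({f, g, p, q} : Set A)) : r ∈ Ideal.span {f, g, p, q} :=
    Ideal.subset_span hr
  apply le_antisymm <;> rw [Ideal.span_le]
  · rintro r (rfl | rfl | rfl | rfl)
    · exact hmem _ _ _ (by simp)
    · exact hmem _ _ _ (by simp)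
    · exact Ideal.pow_sub_one_mem_of_dvd (Nat.gcd_dvd_left a a₀) (hmem _ _ _ (by simp))
    · exact Ideal.pow_sub_one_mem_of_dvd (Nat.gcd_dvd_left b b₀) (hmem _ _ _ (by simp))
  · rintro r (rfl | rfl | rfl | rfl)
    · exact hmem _ _ _ (by simp)
    · exact hmem _ _ _ (by simp)
    · exact Ideal.pow_gcd_sub_one_mem (hmem _ _ _ (by simp)) (hle _ _ hu)
    · exact Ideal.pow_gcd_sub_one_mem (hmem _ _ _ (by simp)) (hle _ _ hv)

/-- If `x^{ℓ₀} − 1` and `y^{m₀} − 1` lie in the ideal `(f, g)` (anyon periods), then the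
logical dimension of a BB code on an `ℓ × m` torus depends only on `gcd(ℓ, ℓ₀)` and
`gcd(m, m₀)`:
`dim_{F₂} R/(f, g, x^ℓ − 1, y^m − 1) = dim_{F₂} R/(f, g, x^{gcd(ℓ,ℓ₀)} − 1, y^{gcd(m,m₀)} − 1)`. -/
theorem logical_dim_gcd (f g : LaurentR) (ℓ₀ m₀ ℓ m : ℕ)
    (hℓ₀ : 0 < ℓ₀) (hm₀ : 0 < m₀) (hℓ : 0 < ℓ) (hm : 0 < m)
    (hx : mono (ℓ₀ : ℤ) 0 - 1 ∈ Ideal.span ({f, g} : Set LaurentR))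
    (hy : mono 0 (m₀ : ℤ) - 1 ∈ Ideal.span ({f, g} : Set LaurentR)) :
    Module.finrank (ZMod 2)
      (LaurentR ⧸ Ideal.span ({f, g, mono (ℓ : ℤ) 0 - 1, mono 0 (m : ℤ) - 1} : Set LaurentR)) =
    Module.finrank (ZMod 2)
      (LaurentR ⧸ Ideal.span ({f, g, mono (Nat.gcd ℓ ℓ₀ : ℤ) 0 - 1,
        mono 0 (Nat.gcd m m₀ : ℤ) - 1} : Set LaurentR)) := by
  rw [mono_natCast_zero] at hx
  rw [mono_zero_natCast] at hy
  rw [mono_natCast_zero ℓ, mono_natCast_zero (Nat.gcd ℓ ℓ₀), mono_zero_natCast m,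
    mono_zero_natCast (Nat.gcd m m₀),
    Ideal.span_pow_sub_one_eq_span_pow_gcd_sub_one ℓ m hx hy]
end
end

section
/- Let R be a commutative ring and a, b, c, d ∈ R. Assume both Koszul complexes R → R × R → R are exact at the middle term: LinearMap.ker ((u, v) ↦ a·u + b·v) = LinearMap.range (w ↦ (b·w, −a·w)) and LinearMap.ker ((u, v) ↦ c·u + d·v) = LinearMap.range (w ↦ (d·w, −c·w)). Let R₁ = R ⧸ Ideal.span {c, d} and R₂ = R ⧸ Ideal.span {a, b}, and form the modified Koszul complexes R₁ → R₁ × R₁ → R₁ with maps ∂̃₂ : w ↦ (b̄·w, −ā·w) and ∂̃₁ : (u, v) ↦ ā·u + b̄·v (where ā, b̄ are the residue classes of a, b in R₁), and symmetrically σ̃₂, σ̃₁ over R₂ using the classes of c, d. Then the homology modules H(a, b; c, d) := ker ∂̃₁ ⧸ im ∂̃₂ and H(c, d; a, b) := ker σ̃₁ ⧸ im σ̃₂ are isomorphic as R-modules. -/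
noncomputable section

variable (R : Type) [CommRing R]

/-- The modified Koszul map `∂̃₁ : R₁ × R₁ → R₁`, `(u, v) ↦ ā·u + b̄·v`, where `R₁ = R ⧸ (c, d)`
and `ā, b̄` are the residue classes of `a, b`, as an `R`-linear map. -/
def modD1 (a b c d : R) :
    (R ⧸ Ideal.span ({c, d} : Set R)) × (R ⧸ Ideal.span ({c, d} : Set R)) →ₗ[R]
      (R ⧸ Ideal.span ({c, d} : Set R)) :=
  (LinearMap.mulLeft R (Ideal.Quotient.mk (Ideal.span ({c, d} : Set R)) a)).coprod
    (LinearMap.mulLeft R (Ideal.Quotient.mk (Ideal.span ({c, d} : Set R)) b))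

/-- The modified Koszul map `∂̃₂ : R₁ → R₁ × R₁`, `w ↦ (b̄·w, −ā·w)`, as an `R`-linear map. -/
def modD2 (a b c d : R) :
    (R ⧸ Ideal.span ({c, d} : Set R)) →ₗ[R]
      (R ⧸ Ideal.span ({c, d} : Set R)) × (R ⧸ Ideal.span ({c, d} : Set R)) :=
  (LinearMap.mulLeft R (Ideal.Quotient.mk (Ideal.span ({c, d} : Set R)) b)).prod
    (-(LinearMap.mulLeft R (Ideal.Quotient.mk (Ideal.span ({c, d} : Set R)) a)))

/-- The homology `H(a, b; c, d) = ker ∂̃₁ ⧸ im ∂̃₂` of the modified Koszul complex. -/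
abbrev koszulHomology (a b c d : R) :=
  (LinearMap.ker (modD1 R a b c d)) ⧸
    ((LinearMap.range (modD2 R a b c d)).comap (LinearMap.ker (modD1 R a b c d)).subtype)

/-- Pairs `((u, v), (x, y))` of lifts satisfying `a·u + b·v = c·x + d·y`: the first component
lifts a cycle for `H(a, b; c, d)`, the second one a cycle for `H(c, d; a, b)`. -/
def koszulLift (a b c d : R) : Submodule R ((R × R) × (R × R)) :=
  LinearMap.eqLocus
    (((LinearMap.mulLeft R a).coprod (LinearMap.mulLeft R b)).comp (LinearMap.fst R _ _))
    (((LinearMap.mulLeft R c).coprod (LinearMap.mulLeft R d)).comp (LinearMap.snd R _ _))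

variable {R}

theorem mem_koszulLift {a b c d : R} {z : (R × R) × (R × R)} :
    z ∈ koszulLift R a b c d ↔ a * z.1.1 + b * z.1.2 = c * z.2.1 + d * z.2.2 := by
  simp [koszulLift, LinearMap.mem_eqLocus]

theorem mk_mem_ker_modD1_iff {a b c d u v : R} :
    ((Ideal.Quotient.mk (Ideal.span {c, d}) u, Ideal.Quotient.mk (Ideal.span {c, d}) v) ∈
      LinearMap.ker (modD1 R a b c d)) ↔ ∃ x y, a * u + b * v = c * x + d * y := by
  simp only [modD1, LinearMap.mem_ker, LinearMap.coprod_apply, LinearMap.mulLeft_apply,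
    ← map_mul, ← map_add, Ideal.Quotient.eq_zero_iff_mem, Ideal.mem_span_pair]
  exact exists₂_congr fun x y => by rw [mul_comm x, mul_comm y, eq_comm]

theorem mk_mem_range_modD2_iff {a b c d u v : R} :
    ((Ideal.Quotient.mk (Ideal.span {c, d}) u, Ideal.Quotient.mk (Ideal.span {c, d}) v) ∈
      LinearMap.range (modD2 R a b c d)) ↔
      ∃ w s t s' t', u = b * w + (c * s + d * t) ∧ v = -(a * w) + (c * s' + d * t') := by
  simp only [modD2, LinearMap.mem_range, Ideal.Quotient.mk_surjective.exists,
    LinearMap.prod_apply, Function.prod_apply, LinearMap.neg_apply, LinearMap.mulLeft_apply,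
    ← map_mul, ← map_neg, Prod.mk.injEq]
  refine exists_congr fun w => ?_
  rw [eq_comm, Ideal.Quotient.eq, Ideal.mem_span_pair, eq_comm, Ideal.Quotient.eq,
    Ideal.mem_span_pair]
  constructor
  · rintro ⟨⟨s, t, h⟩, s', t', h'⟩
    exact ⟨s, t, s', t', by linear_combination -h, by linear_combination -h'⟩
  · rintro ⟨s, t, s', t', h, h'⟩
    exact ⟨⟨s, t, by linear_combination -h⟩, s', t', by linear_combination -h'⟩

/-- The `R`-linear map sending a lift to the homology class of its first component. -/
def koszulLiftToHomology (a b c d : R) : koszulLift R a b c d →ₗ[R] koszulHomology R a b c d :=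
  (Submodule.mkQ _).comp <| LinearMap.codRestrict _
    ((((Ideal.span {c, d}).mkQ.prodMap (Ideal.span {c, d}).mkQ).comp (LinearMap.fst R _ _)).comp
      (koszulLift R a b c d).subtype)
    fun z => mk_mem_ker_modD1_iff.2 ⟨_, _, mem_koszulLift.1 z.2⟩

theorem koszulLiftToHomology_surjective (a b c d : R) :
    Function.Surjective (koszulLiftToHomology a b c d) := by
  refine (Submodule.mkQ_surjective _).comp ?_
  rintro ⟨⟨u, v⟩, h⟩
  obtain ⟨u, rfl⟩ := Ideal.Quotient.mk_surjective u
  obtain ⟨v, rfl⟩ := Ideal.Quotient.mk_surjective v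
  obtain ⟨x, y, hxy⟩ := mk_mem_ker_modD1_iff.1 h
  exact ⟨⟨((u, v), (x, y)), mem_koszulLift.2 hxy⟩, rfl⟩

theorem mem_ker_koszulLiftToHomology {a b c d : R} {z : koszulLift R a b c d} :
    z ∈ LinearMap.ker (koszulLiftToHomology a b c d) ↔
      ∃ w s t s' t', z.1.1.1 = b * w + (c * s + d * t) ∧
        z.1.1.2 = -(a * w) + (c * s' + d * t') := by
  rw [← mk_mem_range_modD2_iff, LinearMap.mem_ker]
  exact Submodule.Quotient.mk_eq_zero _

/-- Exchanging the two components of a lift. -/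
def koszulLiftSwap (a b c d : R) : koszulLift R a b c d ≃ₗ[R] koszulLift R c d a b where
  toFun z := ⟨z.1.swap, mem_koszulLift.2 (mem_koszulLift.1 z.2).symm⟩
  invFun z := ⟨z.1.swap, mem_koszulLift.2 (mem_koszulLift.1 z.2).symm⟩
  map_add' _ _ := rfl
  map_smul' _ _ := rfl
  left_inv _ := rfl
  right_inv _ := rfl

theorem swap_mem_ker_koszulLiftToHomology {a b c d : R}
    (hcd : LinearMap.ker ((LinearMap.mulLeft R c).coprod (LinearMap.mulLeft R d)) =
      LinearMap.range ((LinearMap.mulLeft R d).prod (-(LinearMap.mulLeft R c))))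
    {z : koszulLift R a b c d} (hz : z ∈ LinearMap.ker (koszulLiftToHomology a b c d)) :
    koszulLiftSwap a b c d z ∈ LinearMap.ker (koszulLiftToHomology c d a b) := by
  obtain ⟨⟨⟨u, v⟩, x, y⟩, h⟩ := z
  obtain ⟨w, s, t, s', t', hu, hv⟩ := mem_ker_koszulLiftToHomology.1 hz
  rw [mem_koszulLift] at h
  dsimp only at h hu hv
  have hmem : (x - (a * s + b * s'), y - (a * t + b * t')) ∈
      LinearMap.ker ((LinearMap.mulLeft R c).coprod (LinearMap.mulLeft R d)) := by
    simp only [LinearMap.mem_ker, LinearMap.coprod_apply, LinearMap.mulLeft_apply]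
    linear_combination -h + a * hu + b * hv
  rw [hcd] at hmem
  obtain ⟨r, hr⟩ := hmem
  obtain ⟨hx, hy⟩ := Prod.mk.inj hr
  simp only [LinearMap.neg_apply, LinearMap.mulLeft_apply] at hx hy
  refine mem_ker_koszulLiftToHomology.2 ⟨r, s, s', t, t', ?_, ?_⟩
  · change x = _
    linear_combination -hx
  · change y = _
    linear_combination -hy

theorem nonempty_linearEquiv_of_ker_iff {M N P Q : Type*} [AddCommGroup M] [AddCommGroup N]
    [AddCommGroup P] [AddCommGroup Q] [Module R M] [Module R N] [Module R P] [Module R Q]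
    {f : M →ₗ[R] P} {g : N →ₗ[R] Q} (hf : Function.Surjective f) (hg : Function.Surjective g)
    (e : M ≃ₗ[R] N) (h : ∀ z, z ∈ LinearMap.ker f ↔ e z ∈ LinearMap.ker g) :
    Nonempty (P ≃ₗ[R] Q) :=
  have hker : LinearMap.ker f = LinearMap.ker (g.comp e.toLinearMap) := Submodule.ext h
  ⟨(f.quotKerEquivOfSurjective hf).symm ≪≫ₗ Submodule.quotEquivOfEq _ _ hker ≪≫ₗ
    (g.comp e.toLinearMap).quotKerEquivOfSurjective (hg.comp e.surjective)⟩

variable (R)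

/-- Duality of Koszul complexes: if both Koszul complexes `R → R × R → R` (for `(a, b)` and
for `(c, d)`) are exact at the middle term, then the homologies of the modified Koszul
complexes, `H(a, b; c, d)` and `H(c, d; a, b)`, are isomorphic as `R`-modules. -/
theorem koszul_duality (a b c d : R)
    (hab : LinearMap.ker ((LinearMap.mulLeft R a).coprod (LinearMap.mulLeft R b)) =
      LinearMap.range ((LinearMap.mulLeft R b).prod (-(LinearMap.mulLeft R a))))
    (hcd : LinearMap.ker ((LinearMap.mulLeft R c).coprod (LinearMap.mulLeft R d)) =
      LinearMap.range ((LinearMap.mulLeft R d).prod (-(LinearMap.mulLeft R c)))) :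
    Nonempty ((koszulHomology R a b c d) ≃ₗ[R] (koszulHomology R c d a b)) := by
  exact nonempty_linearEquiv_of_ker_iff (koszulLiftToHomology_surjective a b c d)
    (koszulLiftToHomology_surjective c d a b) (koszulLiftSwap a b c d) fun _ =>
    ⟨swap_mem_ker_koszulLiftToHomology hcd, swap_mem_ker_koszulLiftToHomology hab⟩
end
end

section
/- Let R be a commutative ring and a, b, c, d ∈ R. Assume the (a, b)-Koszul complex is exact at the middle term: LinearMap.ker ((u, v) ↦ a·u + b·v) = LinearMap.range (w ↦ (b·w, −a·w)). Let R₁ = R ⧸ Ideal.span {c, d} and form the modified Koszul complex R₁ → R₁ × R₁ → R₁ with maps ∂̃₂ : w ↦ (b̄·w, −ā·w) and ∂̃₁ : (u, v) ↦ ā·u + b̄·v, where ā, b̄ are the residue classes of a, b. Then the homology H(a, b; c, d) := ker ∂̃₁ ⧸ im ∂̃₂ is isomorphic as an R-module to (Ideal.span {a, b} ⊓ Ideal.span {c, d}) ⧸ Ideal.span {a·c, a·d, b·c, b·d}. -/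
noncomputable section

variable (R : Type) [CommRing R]

/-- The intersection of ideals `W = (a, b) ⊓ (c, d)` as a submodule of `R`. -/
abbrev interIdeal (a b c d : R) : Submodule R R :=
  (Ideal.span ({a, b} : Set R) ⊓ Ideal.span ({c, d} : Set R) : Ideal R)

/-- The ideal `W₀ = (a·c, a·d, b·c, b·d)`, viewed as a submodule of `W = (a, b) ⊓ (c, d)`. -/
abbrev prodIdealIn (a b c d : R) : Submodule R (interIdeal R a b c d) :=
  Submodule.comap (interIdeal R a b c d).subtype
    (Ideal.span ({a * c, a * d, b * c, b * d} : Set R) : Submodule R R)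

/-- Two surjective linear maps with the same source and the same kernel have isomorphic targets. -/
theorem nonempty_linearEquiv_of_ker_eq {R P M N : Type*} [Ring R] [AddCommGroup P] [AddCommGroup M]
    [AddCommGroup N] [Module R P] [Module R M] [Module R N] (f : P →ₗ[R] M) (g : P →ₗ[R] N)
    (hf : Function.Surjective f) (hg : Function.Surjective g)
    (h : LinearMap.ker f = LinearMap.ker g) : Nonempty (M ≃ₗ[R] N) :=
  ⟨(f.quotKerEquivOfSurjective hf).symm ≪≫ₗ Submodule.quotEquivOfEq _ _ h ≪≫ₗ
    g.quotKerEquivOfSurjective hg⟩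

theorem mem_span_mul_pairs {R : Type*} [CommRing R] {a b c d x : R} :
    x ∈ Ideal.span ({a * c, a * d, b * c, b * d} : Set R) ↔
      ∃ j ∈ Ideal.span ({c, d} : Set R), ∃ k ∈ Ideal.span ({c, d} : Set R),
        a * j + b * k = x := by
  rw [← Ideal.span_pair_mul_span_pair, Ideal.span_insert a {b}, Ideal.sup_mul, Submodule.mem_sup]
  simp only [Ideal.mem_span_singleton_mul]
  constructor
  · rintro ⟨_, ⟨j, hj, rfl⟩, _, ⟨k, hk, rfl⟩, h⟩
    exact ⟨j, hj, k, hk, h⟩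
  · rintro ⟨j, hj, k, hk, h⟩
    exact ⟨_, ⟨j, hj, rfl⟩, _, ⟨k, hk, rfl⟩, h⟩

theorem modD1_mk (a b c d u v : R) :
    modD1 R a b c d (Ideal.Quotient.mk _ u, Ideal.Quotient.mk _ v) =
      Ideal.Quotient.mk _ (a * u + b * v) := by
  simp [modD1]

theorem modD2_mk (a b c d w : R) :
    modD2 R a b c d (Ideal.Quotient.mk _ w) =
      (Ideal.Quotient.mk _ (b * w), Ideal.Quotient.mk _ (-(a * w))) := by
  simp [modD2]

theorem mk_mem_range_modD2 {a b c d u v : R} :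
    (Ideal.Quotient.mk _ u, Ideal.Quotient.mk _ v) ∈ LinearMap.range (modD2 R a b c d) ↔
      ∃ w, b * w - u ∈ Ideal.span ({c, d} : Set R) ∧
        -(a * w) - v ∈ Ideal.span ({c, d} : Set R) := by
  simp only [LinearMap.mem_range, Ideal.Quotient.mk_surjective.exists, modD2_mk, Prod.mk.injEq,
    Ideal.Quotient.eq]

/-- The pairs `(u, v)` with `a * u + b * v ∈ (c, d)`, i.e. the lifts of cycles of the modified
Koszul complex. -/
def liftedCycles (a b c d : R) : Submodule R (R × R) :=
  Submodule.comap ((LinearMap.mulLeft R a).coprod (LinearMap.mulLeft R b))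
    (Ideal.span ({c, d} : Set R))

theorem mem_liftedCycles {a b c d : R} {p : R × R} :
    p ∈ liftedCycles R a b c d ↔ a * p.1 + b * p.2 ∈ Ideal.span ({c, d} : Set R) :=
  Iff.rfl

/-- Reduction modulo `(c, d)` of lifted cycles. -/
def liftedCyclesToCycles (a b c d : R) :
    liftedCycles R a b c d →ₗ[R] LinearMap.ker (modD1 R a b c d) :=
  ((Ideal.Quotient.mkₐ R (Ideal.span ({c, d} : Set R))).toLinearMap.prodMap
    (Ideal.Quotient.mkₐ R (Ideal.span ({c, d} : Set R))).toLinearMap).restrict fun p hp =>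
      (modD1_mk R a b c d p.1 p.2).trans (Ideal.Quotient.eq_zero_iff_mem.2 hp)

theorem liftedCyclesToCycles_surjective (a b c d : R) :
    Function.Surjective (liftedCyclesToCycles R a b c d) := by
  rintro ⟨⟨x, y⟩, h⟩
  obtain ⟨u, rfl⟩ := Ideal.Quotient.mk_surjective x
  obtain ⟨v, rfl⟩ := Ideal.Quotient.mk_surjective y
  rw [LinearMap.mem_ker, modD1_mk, Ideal.Quotient.eq_zero_iff_mem] at h
  exact ⟨⟨(u, v), h⟩, rfl⟩

/-- The map `(u, v) ↦ a * u + b * v` from lifted cycles to `(a, b) ⊓ (c, d)`. -/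
def liftedCyclesToInter (a b c d : R) :
    liftedCycles R a b c d →ₗ[R] interIdeal R a b c d :=
  ((LinearMap.mulLeft R a).coprod (LinearMap.mulLeft R b)).restrict fun p hp =>
    ⟨Ideal.mem_span_pair.2 ⟨p.1, p.2, by simp [mul_comm]⟩, hp⟩

theorem liftedCyclesToInter_surjective (a b c d : R) :
    Function.Surjective (liftedCyclesToInter R a b c d) := by
  rintro ⟨x, hx, hx'⟩
  obtain ⟨u, v, rfl⟩ := Ideal.mem_span_pair.1 hx
  have huv : a * u + b * v = u * a + v * b := by ring
  exact ⟨⟨(u, v), mem_liftedCycles R |>.2 (huv ▸ hx')⟩, Subtype.ext huv⟩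

/-- If the `(a, b)`-Koszul complex is exact at the middle term, a pair reduces to a boundary modulo
`(c, d)` exactly when its image under `(u, v) ↦ a * u + b * v` lies in `(a, b) * (c, d)`. -/
theorem mk_mem_range_modD2_iff_mem_span {a b c d : R}
    (hab : LinearMap.ker ((LinearMap.mulLeft R a).coprod (LinearMap.mulLeft R b)) =
      LinearMap.range ((LinearMap.mulLeft R b).prod (-(LinearMap.mulLeft R a)))) (u v : R) :
    (Ideal.Quotient.mk _ u, Ideal.Quotient.mk _ v) ∈ LinearMap.range (modD2 R a b c d) ↔
      a * u + b * v ∈ Ideal.span ({a * c, a * d, b * c, b * d} : Set R) := by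
  rw [mk_mem_range_modD2, mem_span_mul_pairs]
  constructor
  · rintro ⟨w, hu, hv⟩
    exact ⟨_, neg_mem hu, _, neg_mem hv, by ring⟩
  · rintro ⟨j, hj, k, hk, h⟩
    have hker : (u - j, v - k) ∈
        LinearMap.ker ((LinearMap.mulLeft R a).coprod (LinearMap.mulLeft R b)) := by
      simp only [LinearMap.mem_ker, LinearMap.coprod_apply, LinearMap.mulLeft_apply]
      linear_combination -h
    rw [hab] at hker
    obtain ⟨w, hw⟩ := hker
    have hu : b * w = u - j := congrArg Prod.fst hw
    have hv : -(a * w) = v - k := congrArg Prod.snd hw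
    refine ⟨w, ?_, ?_⟩
    · rw [hu, sub_sub_cancel_left]
      exact neg_mem hj
    · rw [hv, sub_sub_cancel_left]
      exact neg_mem hk

/-- If the `(a, b)`-Koszul complex is exact at the middle term, then the homology
`H(a, b; c, d)` of the modified Koszul complex over `R ⧸ (c, d)` is isomorphic as an
`R`-module to `((a, b) ⊓ (c, d)) ⧸ (a·c, a·d, b·c, b·d)`. -/
theorem koszul_homology_eq_ideal_quotient (a b c d : R)
    (hab : LinearMap.ker ((LinearMap.mulLeft R a).coprod (LinearMap.mulLeft R b)) =
      LinearMap.range ((LinearMap.mulLeft R b).prod (-(LinearMap.mulLeft R a)))) :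
    Nonempty ((koszulHomology R a b c d) ≃ₗ[R]
      ((interIdeal R a b c d) ⧸ (prodIdealIn R a b c d))) := by
  refine nonempty_linearEquiv_of_ker_eq
    (Submodule.mkQ _ ∘ₗ liftedCyclesToCycles R a b c d)
    ((prodIdealIn R a b c d).mkQ ∘ₗ liftedCyclesToInter R a b c d)
    ((Submodule.mkQ_surjective _).comp (liftedCyclesToCycles_surjective R a b c d))
    ((Submodule.mkQ_surjective _).comp (liftedCyclesToInter_surjective R a b c d)) ?_
  rw [LinearMap.ker_comp, LinearMap.ker_comp, Submodule.ker_mkQ, Submodule.ker_mkQ]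
  ext ⟨⟨u, v⟩, _⟩
  exact mk_mem_range_modD2_iff_mem_span R hab u v
end
end

section
/- Let ℓ, m be positive integers and let S = F₂[x, y] ⧸ (x^{ℓ} − 1, y^{m} − 1), the group algebra of the finite abelian group ℤ/ℓ × ℤ/m over F₂. For any f, g ∈ S define h_X : S → S × S, u ↦ (f·u, g·u), and h_Z† : S × S → S, (u, v) ↦ g·u + f·v. Then LinearMap.range h_X ≤ LinearMap.ker h_Z†, and the F₂-dimension of the homology satisfies dim_{F₂} (ker h_Z† ⧸ range h_X) = 2 · dim_{F₂} (S ⧸ Ideal.span {f, g}). (This is the formula k(ℓ, m) = 2·dim_{F₂} R/(f, g, x^ℓ − 1, y^m − 1) for the number of logical qubits of a BB code on an ℓ × m torus.) -/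
noncomputable section

/-- The bivariate polynomial ring `F₂[x, y]`. -/
abbrev P2 : Type := MvPolynomial (Fin 2) (ZMod 2)

/-- `S = F₂[x, y] ⧸ (x^ℓ − 1, y^m − 1)`, the group algebra of `ℤ/ℓ × ℤ/m` over `F₂`. -/
abbrev Storus (ℓ m : ℕ) : Type :=
  P2 ⧸ Ideal.span ({(MvPolynomial.X 0 : P2) ^ ℓ - 1, (MvPolynomial.X 1 : P2) ^ m - 1} : Set P2)

/-- The BB check map `h_X : S → S × S`, `u ↦ (f·u, g·u)`, as an `F₂`-linear map. -/
def hXS (ℓ m : ℕ) (f g : Storus ℓ m) : Storus ℓ m →ₗ[ZMod 2] Storus ℓ m × Storus ℓ m :=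
  (LinearMap.mulLeft (ZMod 2) f).prod (LinearMap.mulLeft (ZMod 2) g)

/-- The BB check map `h_Z† : S × S → S`, `(u, v) ↦ g·u + f·v`, as an `F₂`-linear map. -/
def hZdagS (ℓ m : ℕ) (f g : Storus ℓ m) : Storus ℓ m × Storus ℓ m →ₗ[ZMod 2] Storus ℓ m :=
  (LinearMap.mulLeft (ZMod 2) g).coprod (LinearMap.mulLeft (ZMod 2) f)

open LinearMap

/-- The group algebra of `ℤ/ℓ × ℤ/m` over `F₂`. -/
abbrev TorusGroupAlgebra (ℓ m : ℕ) : Type := AddMonoidAlgebra (ZMod 2) (ZMod ℓ × ZMod m)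

namespace Storus

variable {ℓ m : ℕ}

/-- The class of the variable `X i` in `S`. -/
def var (ℓ m : ℕ) (i : Fin 2) : Storus ℓ m := Ideal.Quotient.mk _ (MvPolynomial.X i)

lemma var_zero_pow : var ℓ m 0 ^ ℓ = 1 := by
  rw [var, ← map_pow, ← map_one (Ideal.Quotient.mk _), Ideal.Quotient.eq]
  exact Ideal.subset_span (by simp)

lemma var_one_pow : var ℓ m 1 ^ m = 1 := by
  rw [var, ← map_pow, ← map_one (Ideal.Quotient.mk _), Ideal.Quotient.eq]
  exact Ideal.subset_span (by simp)

/-- The algebra map from `S` to the group algebra sending `x` and `y` to the generators. -/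
def toGroupAlgebra (ℓ m : ℕ) : Storus ℓ m →ₐ[ZMod 2] TorusGroupAlgebra ℓ m :=
  Ideal.Quotient.liftₐ _
    (MvPolynomial.aeval ![AddMonoidAlgebra.single ((1, 0) : ZMod ℓ × ZMod m) (1 : ZMod 2),
      AddMonoidAlgebra.single ((0, 1) : ZMod ℓ × ZMod m) (1 : ZMod 2)]) (by
    intro a ha
    refine (Ideal.span_le (I := RingHom.ker _)).2 ?_ ha
    rintro _ (rfl | rfl) <;>
      simp [RingHom.mem_ker, AddMonoidAlgebra.single_pow, sub_eq_zero] <;> rfl)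

@[simp] lemma toGroupAlgebra_var_zero :
    toGroupAlgebra ℓ m (var ℓ m 0) = AddMonoidAlgebra.single (1, 0) 1 := by
  exact (MvPolynomial.aeval_X _ _).trans rfl

@[simp] lemma toGroupAlgebra_var_one :
    toGroupAlgebra ℓ m (var ℓ m 1) = AddMonoidAlgebra.single (0, 1) 1 := by
  exact (MvPolynomial.aeval_X _ _).trans rfl

/-- The character `ℤ/n → R` determined by an `n`-th root of unity. -/
def powHom {R : Type*} [CommRing R] {n : ℕ} (hn : 0 < n) (r : R) (hr : r ^ n = 1) :
    Multiplicative (ZMod n) →* R :=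
  (Units.coeHom R).comp (AddMonoidHom.toMultiplicativeLeft (ZMod.lift n
    ⟨zmultiplesHom (Additive Rˣ) (Additive.ofMul (Units.ofPowEqOne r n hr hn.ne')), by
      simp [← ofMul_pow]⟩))

lemma powHom_one {R : Type*} [CommRing R] {n : ℕ} (hn : 0 < n) (r : R) (hr : r ^ n = 1) :
    powHom hn r hr (Multiplicative.ofAdd 1) = r := by
  have h := ZMod.lift_coe n
    ⟨zmultiplesHom (Additive Rˣ) (Additive.ofMul (Units.ofPowEqOne r n hr hn.ne')), by
      simp [← ofMul_pow]⟩ 1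
  rw [Int.cast_one] at h
  simp [powHom, h]

/-- The algebra map from the group algebra to `S` sending the generators to `x` and `y`. -/
def ofGroupAlgebra (hℓ : 0 < ℓ) (hm : 0 < m) : TorusGroupAlgebra ℓ m →ₐ[ZMod 2] Storus ℓ m :=
  AddMonoidAlgebra.lift (ZMod 2) (Storus ℓ m) (ZMod ℓ × ZMod m)
    ((powHom hℓ _ var_zero_pow).comp (AddMonoidHom.fst _ _).toMultiplicative *
      (powHom hm _ var_one_pow).comp (AddMonoidHom.snd _ _).toMultiplicative)

lemma ofGroupAlgebra_comp_toGroupAlgebra (hℓ : 0 < ℓ) (hm : 0 < m) :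
    (ofGroupAlgebra hℓ hm).comp (toGroupAlgebra ℓ m) = AlgHom.id _ _ := by
  apply Ideal.Quotient.algHom_ext
  apply MvPolynomial.algHom_ext
  intro i
  change ofGroupAlgebra hℓ hm (toGroupAlgebra ℓ m (var ℓ m i)) = var ℓ m i
  fin_cases i
  · simp [ofGroupAlgebra, powHom_one]
  · simp [ofGroupAlgebra, powHom_one]

lemma toGroupAlgebra_injective (hℓ : 0 < ℓ) (hm : 0 < m) :
    Function.Injective (toGroupAlgebra ℓ m) :=
  Function.LeftInverse.injective (g := ofGroupAlgebra hℓ hm) fun a =>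
    DFunLike.congr_fun (ofGroupAlgebra_comp_toGroupAlgebra hℓ hm) a

lemma finite (hℓ : 0 < ℓ) (hm : 0 < m) : Module.Finite (ZMod 2) (Storus ℓ m) := by
  have : NeZero ℓ := ⟨hℓ.ne'⟩
  have : NeZero m := ⟨hm.ne'⟩
  have : Module.Finite (ZMod 2) (TorusGroupAlgebra ℓ m) := inferInstance
  exact Module.Finite.of_injective (toGroupAlgebra ℓ m).toLinearMap
    (toGroupAlgebra_injective hℓ hm)

lemma exists_toGroupAlgebra_eq_single (hℓ : 0 < ℓ) (hm : 0 < m) (k : ZMod ℓ × ZMod m) :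
    ∃ b, toGroupAlgebra ℓ m b = AddMonoidAlgebra.single k 1 := by
  have : NeZero ℓ := ⟨hℓ.ne'⟩
  have : NeZero m := ⟨hm.ne'⟩
  exact ⟨var ℓ m 0 ^ k.1.val * var ℓ m 1 ^ k.2.val, by
    simp [AddMonoidAlgebra.single_pow, AddMonoidAlgebra.single_mul_single]⟩

/-- The coefficient of the identity element, a Frobenius form on `S`. -/
def trace (ℓ m : ℕ) : Storus ℓ m →ₗ[ZMod 2] ZMod 2 where
  toFun a := (toGroupAlgebra ℓ m a).coeff 0
  map_add' := by simp
  map_smul' := by simp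

lemma eq_zero_of_trace_mul_eq_zero (hℓ : 0 < ℓ) (hm : 0 < m) (a : Storus ℓ m)
    (h : ∀ b, trace ℓ m (a * b) = 0) : a = 0 := by
  apply toGroupAlgebra_injective hℓ hm
  rw [map_zero]
  ext k
  obtain ⟨b, hb⟩ := exists_toGroupAlgebra_eq_single hℓ hm (-k)
  have := h b
  simpa [trace, hb] using this

end Storus

section Frobenius

variable {K A : Type*} [Field K] [CommRing A] [Algebra K A] [Module.Finite K A]

/-- In a commutative Frobenius algebra, the annihilator of an ideal has the dimension of the
quotient by that ideal. -/
lemma finrank_annihilator_eq_finrank_quotient (τ : A →ₗ[K] K)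
    (hτ : ∀ a, (∀ b, τ (a * b) = 0) → a = 0) (I : Ideal A) :
    Module.finrank K (I.annihilator.restrictScalars K) = Module.finrank K (A ⧸ I) := by
  let B : LinearMap.BilinForm K A := (LinearMap.mul K A).compr₂ τ
  have hB : ∀ a b, B a b = τ (a * b) := fun _ _ => rfl
  have hsymm : B.IsSymm := ⟨fun a b => by simp [hB, mul_comm]⟩
  have hnd : B.Nondegenerate :=
    ⟨fun a h => hτ a h, fun a h => hτ a fun b => by rw [mul_comm]; exact h b⟩
  have horth : B.orthogonal (I.restrictScalars K) = I.annihilator.restrictScalars K := by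
    ext a
    simp only [LinearMap.BilinForm.mem_orthogonal_iff, hB,
      Submodule.restrictScalars_mem, Submodule.mem_annihilator, smul_eq_mul]
    constructor
    · intro h n hn
      refine hτ _ fun b => ?_
      rw [show a * n * b = n * b * a by ring]
      exact h _ (I.mul_mem_right b hn)
    · intro h n hn
      rw [mul_comm, h n hn, map_zero]
  rw [← horth, LinearMap.BilinForm.finrank_orthogonal hnd]
  have := Submodule.finrank_quotient_add_finrank (I.restrictScalars K)
  have h2 : Module.finrank K (A ⧸ I.restrictScalars K) = Module.finrank K (A ⧸ I) :=
    (Submodule.Quotient.restrictScalarsEquiv K I).finrank_eq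
  omega

/-- The middle homology of `A → A × A → A`, `u ↦ (f u, g u)`, `(u, v) ↦ g u + f v`. -/
lemma finrank_koszul_homology (τ : A →ₗ[K] K)
    (hτ : ∀ a, (∀ b, τ (a * b) = 0) → a = 0) (f g : A)
    (hle : range ((mulLeft K f).prod (mulLeft K g)) ≤ ker ((mulLeft K g).coprod (mulLeft K f))) :
    Module.finrank K (ker ((mulLeft K g).coprod (mulLeft K f)) ⧸
      (range ((mulLeft K f).prod (mulLeft K g))).comap
        (ker ((mulLeft K g).coprod (mulLeft K f))).subtype) =
      2 * Module.finrank K (A ⧸ Ideal.span {f, g}) := by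
  have hker : ker ((mulLeft K f).prod (mulLeft K g)) =
      (Ideal.span {f, g}).annihilator.restrictScalars K := by
    ext a
    simp [Submodule.mem_annihilator_span, mul_comm]
  have hrange : range ((mulLeft K g).coprod (mulLeft K f)) =
      (Ideal.span {f, g}).restrictScalars K := by
    ext a
    simp only [mem_range, coprod_apply, mulLeft_apply, Prod.exists,
      Submodule.restrictScalars_mem, Ideal.mem_span_pair]
    constructor
    · rintro ⟨u, v, rfl⟩
      exact ⟨v, u, by ring⟩
    · rintro ⟨v, u, rfl⟩
      exact ⟨u, v, by ring⟩
  have hann := finrank_annihilator_eq_finrank_quotient τ hτ (Ideal.span {f, g})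
  have hX := finrank_range_add_finrank_ker ((mulLeft K f).prod (mulLeft K g))
  have hZ := finrank_range_add_finrank_ker ((mulLeft K g).coprod (mulLeft K f))
  have hI := Submodule.finrank_quotient_add_finrank ((Ideal.span {f, g}).restrictScalars K)
  have hI' := (Submodule.Quotient.restrictScalarsEquiv K (Ideal.span {f, g})).finrank_eq
  have hH := Submodule.finrank_quotient_add_finrank
    ((range ((mulLeft K f).prod (mulLeft K g))).comap
      (ker ((mulLeft K g).coprod (mulLeft K f))).subtype)
  rw [(Submodule.comapSubtypeEquivOfLe hle).finrank_eq] at hH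
  rw [hker] at hX
  rw [hrange, Module.finrank_prod] at hZ
  omega

end Frobenius

/-- On an `ℓ × m` torus, `range h_X ≤ ker h_Z†` and the number of logical qubits of the CSS
code defined by `f, g` is `k(ℓ, m) = dim_{F₂}(ker h_Z† ⧸ range h_X) = 2·dim_{F₂} S/(f, g)`. -/
theorem bb_logical_qubit_count (ℓ m : ℕ) (hℓ : 0 < ℓ) (hm : 0 < m) (f g : Storus ℓ m) :
    LinearMap.range (hXS ℓ m f g) ≤ LinearMap.ker (hZdagS ℓ m f g) ∧
    Module.finrank (ZMod 2)
      ((LinearMap.ker (hZdagS ℓ m f g)) ⧸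
        ((LinearMap.range (hXS ℓ m f g)).comap (LinearMap.ker (hZdagS ℓ m f g)).subtype)) =
    2 * Module.finrank (ZMod 2) (Storus ℓ m ⧸ Ideal.span ({f, g} : Set (Storus ℓ m))) := by
  have hle : LinearMap.range (hXS ℓ m f g) ≤ LinearMap.ker (hZdagS ℓ m f g) := by
    rintro _ ⟨u, rfl⟩
    have h : g * (f * u) + f * (g * u) = (2 : ZMod 2) • (f * g * u) := by
      rw [two_smul]
      ring
    rw [show (2 : ZMod 2) = 0 from rfl, zero_smul] at h
    simpa [hXS, hZdagS] using h
  have := Storus.finite hℓ hm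
  exact ⟨hle, finrank_koszul_homology (Storus.trace ℓ m)
    (Storus.eq_zero_of_trace_mul_eq_zero hℓ hm) f g hle⟩
end
end

section
/- Let f' = x + x² + y³ and g' = y + y² + x³ in F₂[x, y] (these generate, after clearing monomial units, the same ideal as the BB(1̄, 1̄, 3, 3) polynomials f = 1 + x + x^{-1}y³ and g = 1 + y + y^{-1}x³ on the torus). For all positive integers ℓ, m, the dimension d(ℓ, m) := dim_{F₂} F₂[x, y] ⧸ (f', g', x^{ℓ} − 1, y^{m} − 1) is: 8 if 12 divides gcd(ℓ, m); 6 if 6 divides gcd(ℓ, m) but 12 does not; 4 if 3 divides gcd(ℓ, m) but 6 does not; and 0 otherwise. (Equivalently, the logical dimension k(ℓ, m) = 2·d(ℓ, m) of the BB(1̄, 1̄, 3, 3) code equals 16, 12, 8 or 0 in the respective cases.) -/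
noncomputable section

/-- `f' = x + x² + y³`, a polynomial form of the BB(1̄, 1̄, 3, 3) generator `f`. -/
def fBB : P2 := MvPolynomial.X 0 + (MvPolynomial.X 0) ^ 2 + (MvPolynomial.X 1) ^ 3

/-- `g' = y + y² + x³`, a polynomial form of the BB(1̄, 1̄, 3, 3) generator `g`. -/
def gBB : P2 := MvPolynomial.X 1 + (MvPolynomial.X 1) ^ 2 + (MvPolynomial.X 0) ^ 3

/-- `d(ℓ, m) = dim_{F₂} F₂[x, y] ⧸ (f', g', x^ℓ − 1, y^m − 1)`. -/
def dBB (ℓ m : ℕ) : ℕ :=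
  Module.finrank (ZMod 2)
    (P2 ⧸ Ideal.span ({fBB, gBB, (MvPolynomial.X 0 : P2) ^ ℓ - 1,
      (MvPolynomial.X 1 : P2) ^ m - 1} : Set P2))

open Polynomial in
/-- The cyclotomic polynomial `X² + X + 1` over `F₂`. -/
def qBB : (ZMod 2)[X] := X ^ 2 + X + 1

section Relations

variable {R : Type*} [CommRing R] {x y z r : R}

theorem mul_one_add_of_relations (h2 : (2 : R) = 0) (hf : x + x ^ 2 + y ^ 3 = 0)
    (hg : y + y ^ 2 + x ^ 3 = 0) : y * (1 + (x + y) ^ 4) = x * (1 + (x + y) ^ 4) := by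
  grind

theorem mul_idempotent_of_relations (h2 : (2 : R) = 0) (hf : x + x ^ 2 + y ^ 3 = 0)
    (hg : y + y ^ 2 + x ^ 3 = 0) :
    y * (x + y) ^ 4 = (x ^ 5 + x ^ 4 + x) * (x + y) ^ 4 := by
  grind

theorem quadratic_mul_one_add_eq_zero (h2 : (2 : R) = 0) (hf : x + x ^ 2 + y ^ 3 = 0)
    (hg : y + y ^ 2 + x ^ 3 = 0) (hx : x * z = 1) :
    (x ^ 2 + x + 1) * (1 + (x + y) ^ 4) = 0 := by
  grind

theorem quadratic_pow_three_eq_zero (h2 : (2 : R) = 0) (hf : x + x ^ 2 + y ^ 3 = 0)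
    (hg : y + y ^ 2 + x ^ 3 = 0) (hx : x * z = 1) : (x ^ 2 + x + 1) ^ 3 = 0 := by
  grind

theorem pow_twelve_eq_one (h2 : (2 : R) = 0) (hf : x + x ^ 2 + y ^ 3 = 0)
    (hg : y + y ^ 2 + x ^ 3 = 0) (hx : x * z = 1) : x ^ 12 = 1 ∧ y ^ 12 = 1 := by
  constructor <;> grind

theorem quadratic_mul_idempotent_eq_zero (h2 : (2 : R) = 0) (hf : x + x ^ 2 + y ^ 3 = 0)
    (hg : y + y ^ 2 + x ^ 3 = 0) (hx : x * z = 1) (h : x ^ 3 = 1 ∨ y ^ 3 = 1) :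
    (x ^ 2 + x + 1) * (x + y) ^ 4 = 0 := by
  rcases h with h | h <;> grind

theorem quadratic_sq_mul_idempotent_eq_zero (h2 : (2 : R) = 0) (hf : x + x ^ 2 + y ^ 3 = 0)
    (hg : y + y ^ 2 + x ^ 3 = 0) (hx : x * z = 1) (h : x ^ 6 = 1 ∨ y ^ 6 = 1) :
    (x ^ 2 + x + 1) ^ 2 * (x + y) ^ 4 = 0 := by
  rcases h with h | h <;> grind

theorem one_eq_zero_of_pow_four_eq_one (h2 : (2 : R) = 0) (hf : x + x ^ 2 + y ^ 3 = 0)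
    (hg : y + y ^ 2 + x ^ 3 = 0) (hx : x * z = 1) (h : x ^ 4 = 1 ∨ y ^ 4 = 1) :
    (1 : R) = 0 := by
  rcases h with h | h <;> grind

theorem relations_of_quadratic_pow_three (h2 : (2 : R) = 0) (h : (r ^ 2 + r + 1) ^ 3 = 0) :
    r + r ^ 2 + (r ^ 5 + r ^ 4 + r) ^ 3 = 0 ∧
      (r ^ 5 + r ^ 4 + r) + (r ^ 5 + r ^ 4 + r) ^ 2 + r ^ 3 = 0 ∧
      (r + (r ^ 5 + r ^ 4 + r)) ^ 4 = 1 := by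
  refine ⟨?_, ?_, ?_⟩ <;> grind

theorem pow_eq_one_of_quadratic_pow (h2 : (2 : R) = 0) {j : ℕ} (hj : j ≤ 2)
    (h : (r ^ 2 + r + 1) ^ (j + 1) = 0) {n : ℕ} (hn : 3 * 2 ^ j ∣ n) :
    r ^ n = 1 ∧ (r ^ 5 + r ^ 4 + r) ^ n = 1 := by
  obtain ⟨c, rfl⟩ := hn
  have base : r ^ (3 * 2 ^ j) = 1 ∧ (r ^ 5 + r ^ 4 + r) ^ (3 * 2 ^ j) = 1 := by
    interval_cases j <;> norm_num at h ⊢ <;> constructor <;> grind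
  rw [pow_mul _ (3 * 2 ^ j), pow_mul _ (3 * 2 ^ j), base.1, base.2]
  simp

end Relations

theorem two_eq_zero_of_algebra_zmod_two (R : Type*) [CommRing R] [Algebra (ZMod 2) R] :
    (2 : R) = 0 := by
  have h : (2 : ZMod 2) = 0 := by decide
  simpa only [map_ofNat, map_zero] using congrArg (algebraMap (ZMod 2) R) h

section Decomposition

open Polynomial

theorem monic_qBB_pow (k : ℕ) : (qBB ^ k).Monic := by
  have : qBB.Monic := by
    unfold qBB
    monicity!
  exact this.pow k

theorem natDegree_qBB_pow (k : ℕ) : (qBB ^ k).natDegree = 2 * k := by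
  have : qBB.natDegree = 2 := by
    unfold qBB
    compute_degree!
  rw [natDegree_pow, this, mul_comm]

theorem finrank_adjoinRoot_qBB_pow (k : ℕ) :
    Module.finrank (ZMod 2) (AdjoinRoot (qBB ^ k)) = 2 * k := by
  rw [(AdjoinRoot.powerBasis' (monic_qBB_pow k)).finrank, AdjoinRoot.powerBasis'_dim,
    natDegree_qBB_pow]

instance finite_adjoinRoot_qBB_pow (k : ℕ) :
    Module.Finite (ZMod 2) (AdjoinRoot (qBB ^ k)) :=
  (AdjoinRoot.powerBasis' (monic_qBB_pow k)).finite

theorem quadratic_root_pow_eq_zero (k : ℕ) :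
    ((AdjoinRoot.root (qBB ^ k)) ^ 2 + AdjoinRoot.root (qBB ^ k) + 1) ^ k = 0 := by
  have h : AdjoinRoot.mk (qBB ^ k) ((X ^ 2 + X + 1) ^ k) = 0 := AdjoinRoot.mk_self
  simpa only [map_add, map_pow, map_one, AdjoinRoot.mk_X] using h

variable {R : Type*} [CommRing R] [Algebra (ZMod 2) R] {x y : R}

theorem aeval_mul_eq_aeval_mul {e : R} {h : (ZMod 2)[X]} (he : y * e = aeval x h * e) (F : P2) :
    MvPolynomial.aeval ![x, y] F * e =
      aeval x (MvPolynomial.aeval ![(X : (ZMod 2)[X]), h] F) * e := by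
  induction F using MvPolynomial.induction_on with
  | C a => simp
  | add p q hp hq => simp only [map_add, add_mul, hp, hq]
  | mul_X p i hp =>
    fin_cases i
    · simp only [map_mul, MvPolynomial.aeval_X]
      simp
      linear_combination x * hp
    · simp only [map_mul, MvPolynomial.aeval_X]
      simp
      linear_combination y * hp + aeval x (MvPolynomial.aeval ![(X : (ZMod 2)[X]), h] p) * he

/-- An algebra generated by a solution `(x, y)` of the two equations, on which the local
component at the singular points has length `k`, splits as a product. -/
theorem finrank_eq_of_algHom (k : ℕ) (hk : k ≤ 3) (hf : x + x ^ 2 + y ^ 3 = 0)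
    (hg : y + y ^ 2 + x ^ 3 = 0)
    (hgen : Function.Surjective (MvPolynomial.aeval ![x, y] : P2 →ₐ[ZMod 2] R))
    (hq : (x ^ 2 + x + 1) * (1 + (x + y) ^ 4) = 0)
    (hqk : (x ^ 2 + x + 1) ^ k * (x + y) ^ 4 = 0)
    (φ : R →ₐ[ZMod 2] AdjoinRoot (qBB ^ 1)) (ψ : R →ₐ[ZMod 2] AdjoinRoot (qBB ^ k))
    (hφx : φ x = AdjoinRoot.root _) (hφy : φ y = AdjoinRoot.root _)
    (hψx : ψ x = AdjoinRoot.root _)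
    (hψy : ψ y = AdjoinRoot.root _ ^ 5 + AdjoinRoot.root _ ^ 4 + AdjoinRoot.root _) :
    Module.finrank (ZMod 2) R = 2 + 2 * k := by
  have h2 := two_eq_zero_of_algebra_zmod_two R
  have hφ (p : (ZMod 2)[X]) : φ (aeval x p) = AdjoinRoot.mk _ p := by
    rw [← aeval_algHom_apply, hφx, AdjoinRoot.aeval_eq]
  have hψ (p : (ZMod 2)[X]) : ψ (aeval x p) = AdjoinRoot.mk _ p := by
    rw [← aeval_algHom_apply, hψx, AdjoinRoot.aeval_eq]
  have hφe : φ ((x + y) ^ 4) = 0 := by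
    rw [map_pow, map_add, hφx, hφy, ← two_mul, two_eq_zero_of_algebra_zmod_two]
    simp
  have hψe : ψ ((x + y) ^ 4) = 1 := by
    rw [map_pow, map_add, hψx, hψy]
    exact (relations_of_quadratic_pow_three (two_eq_zero_of_algebra_zmod_two _)
      (pow_eq_zero_of_le hk (quadratic_root_pow_eq_zero k))).2.2
  have hφe' : φ (1 + (x + y) ^ 4) = 1 := by rw [map_add, hφe, map_one, add_zero]
  have hψe' : ψ (1 + (x + y) ^ 4) = 0 := by
    rw [map_add, hψe, map_one, one_add_one_eq_two, two_eq_zero_of_algebra_zmod_two]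
  have key (u : R) : ∃ p r : (ZMod 2)[X],
      u = aeval x p * (1 + (x + y) ^ 4) + aeval x r * (x + y) ^ 4 := by
    obtain ⟨F, rfl⟩ := hgen u
    refine ⟨MvPolynomial.aeval ![X, X] F, MvPolynomial.aeval ![X, X ^ 5 + X ^ 4 + X] F, ?_⟩
    rw [← aeval_mul_eq_aeval_mul (y := y) (e := 1 + (x + y) ^ 4),
      ← aeval_mul_eq_aeval_mul (y := y) (e := (x + y) ^ 4)]
    · linear_combination (-MvPolynomial.aeval ![x, y] F * (x + y) ^ 4) * h2
    · simpa using mul_idempotent_of_relations h2 hf hg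
    · simpa using mul_one_add_of_relations h2 hf hg
  have hinj : Function.Injective (φ.prod ψ) := by
    rw [injective_iff_map_eq_zero]
    intro u hu
    obtain ⟨p, r, rfl⟩ := key u
    rw [AlgHom.prod_apply, Prod.mk_eq_zero] at hu
    obtain ⟨h1, h3⟩ := hu
    rw [map_add, map_mul, map_mul, hφe, hφe', hφ, mul_zero, add_zero, mul_one,
      AdjoinRoot.mk_eq_zero] at h1
    rw [map_add, map_mul, map_mul, hψe, hψe', hψ, hψ, mul_zero, zero_add, mul_one,
      AdjoinRoot.mk_eq_zero] at h3
    obtain ⟨a, rfl⟩ := h1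
    obtain ⟨b, rfl⟩ := h3
    simp only [map_mul, map_pow, map_add, qBB, aeval_X, map_one]
    linear_combination aeval x a * hq + aeval x b * hqk
  have hsurj : Function.Surjective (φ.prod ψ) := by
    rintro ⟨a, b⟩
    obtain ⟨p, rfl⟩ := AdjoinRoot.mk_surjective a
    obtain ⟨r, rfl⟩ := AdjoinRoot.mk_surjective b
    refine ⟨aeval x p * (1 + (x + y) ^ 4) + aeval x r * (x + y) ^ 4, ?_⟩
    rw [AlgHom.prod_apply, map_add φ, map_add ψ, map_mul φ, map_mul φ, map_mul ψ, map_mul ψ, hφe,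
      hφe', hψe, hψe', hφ, hψ, hψ, mul_one, mul_zero, mul_zero, mul_one, add_zero, zero_add]
  rw [(AlgEquiv.ofBijective _ ⟨hinj, hsurj⟩).toLinearEquiv.finrank_eq, Module.finrank_prod,
    finrank_adjoinRoot_qBB_pow, finrank_adjoinRoot_qBB_pow]

end Decomposition

/-- The ideal `(f', g', x^ℓ − 1, y^m − 1)`. -/
abbrev idealBB (ℓ m : ℕ) : Ideal P2 :=
  Ideal.span {fBB, gBB, (MvPolynomial.X 0 : P2) ^ ℓ - 1, (MvPolynomial.X 1 : P2) ^ m - 1}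

theorem idealBB_relations (ℓ m : ℕ) {x y : P2 ⧸ idealBB ℓ m}
    (hx : x = Ideal.Quotient.mk _ (MvPolynomial.X 0))
    (hy : y = Ideal.Quotient.mk _ (MvPolynomial.X 1)) :
    x + x ^ 2 + y ^ 3 = 0 ∧ y + y ^ 2 + x ^ 3 = 0 ∧ x ^ ℓ = 1 ∧ y ^ m = 1 := by
  have h {F : P2} (hF : F ∈ ({fBB, gBB, (MvPolynomial.X 0 : P2) ^ ℓ - 1,
      (MvPolynomial.X 1 : P2) ^ m - 1} : Set P2)) : Ideal.Quotient.mk (idealBB ℓ m) F = 0 :=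
    Ideal.Quotient.eq_zero_iff_mem.2 (Ideal.subset_span hF)
  subst hx hy
  refine ⟨?_, ?_, sub_eq_zero.1 ?_, sub_eq_zero.1 ?_⟩
  · simpa [fBB] using h (F := fBB) (by simp)
  · simpa [gBB] using h (F := gBB) (by simp)
  · simpa using h (F := (MvPolynomial.X 0 : P2) ^ ℓ - 1) (by simp)
  · simpa using h (F := (MvPolynomial.X 1 : P2) ^ m - 1) (by simp)

theorem exists_algHom_of_relations {B : Type*} [CommRing B] [Algebra (ZMod 2) B] (ℓ m : ℕ)
    {a b : B} (hf : a + a ^ 2 + b ^ 3 = 0) (hg : b + b ^ 2 + a ^ 3 = 0) (ha : a ^ ℓ = 1)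
    (hb : b ^ m = 1) : ∃ φ : P2 ⧸ idealBB ℓ m →ₐ[ZMod 2] B,
      φ (Ideal.Quotient.mk _ (MvPolynomial.X 0)) = a ∧
      φ (Ideal.Quotient.mk _ (MvPolynomial.X 1)) = b := by
  refine ⟨Ideal.Quotient.liftₐ _ (MvPolynomial.aeval ![a, b]) ?_, ?_, ?_⟩
  · intro F hF
    suffices idealBB ℓ m ≤ RingHom.ker (MvPolynomial.aeval ![a, b] : P2 →ₐ[ZMod 2] B) from this hF
    rw [Ideal.span_le]
    rintro F (rfl | rfl | rfl | rfl) <;> simp [RingHom.mem_ker, fBB, gBB, hf, hg, ha, hb]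
  · exact (MvPolynomial.aeval_X _ 0).trans (by simp)
  · exact (MvPolynomial.aeval_X _ 1).trans (by simp)

theorem dBB_eq_of_dvd {ℓ m j : ℕ} (hℓ : 0 < ℓ) (hj : j ≤ 2) (hdvd : 3 * 2 ^ j ∣ Nat.gcd ℓ m)
    (hqk : ∀ {x y z : P2 ⧸ idealBB ℓ m}, x + x ^ 2 + y ^ 3 = 0 → y + y ^ 2 + x ^ 3 = 0 →
      x * z = 1 → x ^ ℓ = 1 → y ^ m = 1 → (x ^ 2 + x + 1) ^ (j + 1) * (x + y) ^ 4 = 0) :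
    dBB ℓ m = 2 + 2 * (j + 1) := by
  have hdℓ := hdvd.trans (Nat.gcd_dvd_left ℓ m)
  have hdm := hdvd.trans (Nat.gcd_dvd_right ℓ m)
  obtain ⟨hf, hg, hx, hy⟩ := idealBB_relations ℓ m rfl rfl
  have hz := mul_pow_sub_one hℓ.ne' (Ideal.Quotient.mk (idealBB ℓ m) (MvPolynomial.X 0))
  rw [hx] at hz
  have hroot := quadratic_root_pow_eq_zero 1
  have hroot' := quadratic_root_pow_eq_zero (j + 1)
  have h2 := two_eq_zero_of_algebra_zmod_two (AdjoinRoot (qBB ^ 1))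
  have h2' := two_eq_zero_of_algebra_zmod_two (AdjoinRoot (qBB ^ (j + 1)))
  obtain ⟨φ, hφx, hφy⟩ := exists_algHom_of_relations ℓ m
    (a := AdjoinRoot.root (qBB ^ 1)) (b := AdjoinRoot.root (qBB ^ 1)) (by grind) (by grind)
    (pow_eq_one_of_quadratic_pow h2 (j := 0) (by simp) hroot ((Dvd.intro _ rfl).trans hdℓ)).1
    (pow_eq_one_of_quadratic_pow h2 (j := 0) (by simp) hroot ((Dvd.intro _ rfl).trans hdm)).1
  obtain ⟨hf', hg', -⟩ := relations_of_quadratic_pow_three h2'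
    (pow_eq_zero_of_le (by lia) hroot')
  obtain ⟨ψ, hψx, hψy⟩ := exists_algHom_of_relations ℓ m hf' hg'
    (pow_eq_one_of_quadratic_pow h2' hj hroot' hdℓ).1
    (pow_eq_one_of_quadratic_pow h2' hj hroot' hdm).2
  refine finrank_eq_of_algHom (j + 1) (by lia) hf hg ?_
    (quadratic_mul_one_add_eq_zero (two_eq_zero_of_algebra_zmod_two _) hf hg hz)
    (hqk hf hg hz hx hy) φ ψ hφx hφy hψx hψy
  convert Ideal.Quotient.mkₐ_surjective (ZMod 2) (idealBB ℓ m) using 2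
  ext i
  fin_cases i <;> simp

theorem pow_eq_one_of_gcd_dvd {M : Type*} [Monoid M] {a : M} {n d : ℕ} (h12 : a ^ 12 = 1)
    (hn : a ^ n = 1) (hd : Nat.gcd 12 n ∣ d) : a ^ d = 1 := by
  obtain ⟨c, rfl⟩ := hd
  rw [pow_mul, pow_gcd_eq_one.2 ⟨h12, hn⟩, one_pow]

theorem gcd_twelve_dvd {n : ℕ} : (¬ 3 ∣ n → Nat.gcd 12 n ∣ 4) ∧
    (3 ∣ n → ¬ 6 ∣ n → Nat.gcd 12 n ∣ 3) ∧ (6 ∣ n → ¬ 12 ∣ n → Nat.gcd 12 n ∣ 6) := by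
  have h3 : 3 ∣ n ↔ 3 ∣ Nat.gcd 12 n := by simp [Nat.dvd_gcd_iff]
  have h6 : 6 ∣ n ↔ 6 ∣ Nat.gcd 12 n := by simp [Nat.dvd_gcd_iff]
  have h12 : 12 ∣ n ↔ 12 ∣ Nat.gcd 12 n := by simp [Nat.dvd_gcd_iff]
  rw [h3, h6, h12]
  have hd : Nat.gcd 12 n ∈ Nat.divisors 12 := by simp [Nat.gcd_dvd_left]
  generalize Nat.gcd 12 n = d at hd
  revert d
  decide

/-- Size dependence of the logical dimension of the BB(1̄, 1̄, 3, 3) code: `d(ℓ, m)` equals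
`8` if `12 ∣ gcd(ℓ, m)`; `6` if `6 ∣ gcd(ℓ, m)` but not `12`; `4` if `3 ∣ gcd(ℓ, m)` but not
`6`; and `0` otherwise. -/
theorem bb_1133_topological_frustration (ℓ m : ℕ) (hℓ : 0 < ℓ) (hm : 0 < m) :
    dBB ℓ m =
      if 12 ∣ Nat.gcd ℓ m then 8
      else if 6 ∣ Nat.gcd ℓ m then 6
      else if 3 ∣ Nat.gcd ℓ m then 4
      else 0 := by
  have h2 := two_eq_zero_of_algebra_zmod_two (P2 ⧸ idealBB ℓ m)
  split_ifs with h12 h6 h3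
  · refine dBB_eq_of_dvd hℓ (j := 2) le_rfl h12 fun hf hg hz _ _ => ?_
    rw [quadratic_pow_three_eq_zero h2 hf hg hz, zero_mul]
  · refine dBB_eq_of_dvd hℓ (j := 1) (by simp) h6 fun hf hg hz hx hy => ?_
    obtain ⟨hx', hy'⟩ := pow_twelve_eq_one h2 hf hg hz
    rw [Nat.dvd_gcd_iff] at h12 h6
    refine quadratic_sq_mul_idempotent_eq_zero h2 hf hg hz ?_
    rcases not_and_or.1 h12 with h | h
    · exact .inl (pow_eq_one_of_gcd_dvd hx' hx (gcd_twelve_dvd.2.2 h6.1 h))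
    · exact .inr (pow_eq_one_of_gcd_dvd hy' hy (gcd_twelve_dvd.2.2 h6.2 h))
  · refine dBB_eq_of_dvd hℓ (j := 0) (by simp) h3 fun hf hg hz hx hy => ?_
    obtain ⟨hx', hy'⟩ := pow_twelve_eq_one h2 hf hg hz
    rw [Nat.dvd_gcd_iff] at h6 h3
    rw [zero_add, pow_one]
    refine quadratic_mul_idempotent_eq_zero h2 hf hg hz ?_
    rcases not_and_or.1 h6 with h | h
    · exact .inl (pow_eq_one_of_gcd_dvd hx' hx (gcd_twelve_dvd.2.1 h3.1 h))
    · exact .inr (pow_eq_one_of_gcd_dvd hy' hy (gcd_twelve_dvd.2.1 h3.2 h))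
  · obtain ⟨hf, hg, hx, hy⟩ := idealBB_relations ℓ m rfl rfl
    have hz := mul_pow_sub_one hℓ.ne' (Ideal.Quotient.mk (idealBB ℓ m) (MvPolynomial.X 0))
    rw [hx] at hz
    obtain ⟨hx', hy'⟩ := pow_twelve_eq_one h2 hf hg hz
    rw [Nat.dvd_gcd_iff] at h3
    have h10 := one_eq_zero_of_pow_four_eq_one h2 hf hg hz <| by
      rcases not_and_or.1 h3 with h | h
      · exact .inl (pow_eq_one_of_gcd_dvd hx' hx (gcd_twelve_dvd.1 h))
      · exact .inr (pow_eq_one_of_gcd_dvd hy' hy (gcd_twelve_dvd.1 h))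
    have : Subsingleton (P2 ⧸ idealBB ℓ m) := subsingleton_of_zero_eq_one h10.symm
    exact Module.finrank_zero_of_subsingleton
end
end

section
/- Let c be a positive integer. For the BB(c̄, c̄, c+1, c+1) code, with f = 1 + x + x^{-c} y^{c+1} and g = 1 + y + y^{-c} x^{c+1} in R, the topological index is Q = dim_{F₂} R ⧸ (f, g) = c − p₂(c), where p₂(c) is the largest power of 2 dividing c (i.e., p₂(c) = 2^{ν₂(c)} with ν₂ the 2-adic valuation, Nat.ordProj 2 c in Mathlib). In particular Q = 0 whenever c is a power of 2. -/
noncomputable section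

open Polynomial

/-- Over `F₂` the top-degree terms of `X ^ m + (1 + X) ^ m` cancel; for odd `m` the next one
survives. -/
theorem natDegree_X_pow_add_one_add_X_pow_of_odd {m : ℕ} (hm : Odd m) :
    (X ^ m + (1 + X) ^ m : (ZMod 2)[X]).natDegree = m - 1 := by
  have hm0 : 0 < m := hm.pos
  refine natDegree_eq_of_le_of_coeff_ne_zero ?_ ?_
  · rw [natDegree_le_iff_coeff_eq_zero]
    intro n hn
    rw [coeff_add, coeff_X_pow, coeff_one_add_X_pow]
    obtain rfl | h : n = m ∨ m < n := by omega
    · simpa using CharTwo.add_self_eq_zero (1 : ZMod 2)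
    · simp [h.ne', Nat.choose_eq_zero_of_lt h]
  · rw [coeff_add, coeff_X_pow, coeff_one_add_X_pow, if_neg (by omega), zero_add,
      Nat.choose_symm_of_eq_add (show m = (m - 1) + 1 by omega), Nat.choose_one_right,
      (ZMod.natCast_eq_one_iff_odd).2 hm]
    exact one_ne_zero

theorem natDegree_X_pow_add_one_add_X_pow {c : ℕ} (hc : 0 < c) :
    (X ^ c + (1 + X) ^ c : (ZMod 2)[X]).natDegree = c - 2 ^ c.factorization 2 := by
  set q := 2 ^ c.factorization 2 with hq
  obtain ⟨m, hm⟩ : q ∣ c := Nat.ordProj_dvd c 2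
  have hodd : Odd m := by
    have h := Nat.not_dvd_ordCompl Nat.prime_two hc.ne'
    rw [← hq, hm, Nat.mul_div_cancel_left _ (by positivity)] at h
    rwa [← Nat.not_even_iff_odd, even_iff_two_dvd]
  have hpow : (X ^ c + (1 + X) ^ c : (ZMod 2)[X]) = (X ^ m + (1 + X) ^ m) ^ q := by
    rw [hq, add_pow_char_pow, ← hq, ← pow_mul, ← pow_mul, mul_comm m, ← hm]
  rw [hpow, natDegree_pow, natDegree_X_pow_add_one_add_X_pow_of_odd hodd, Nat.mul_sub_one, ← hm]

section Units

variable {B : Type*} [CommRing B]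

theorem isUnit_left_of_add_eq_one_of_pow_eq_pow {x y : B} {c : ℕ} (hc : c ≠ 0)
    (hadd : x + y = 1) (hpow : x ^ c = y ^ c) : IsUnit x := by
  have hcop : IsCoprime x y := ⟨1, 1, by simpa using hadd⟩
  have h : IsCoprime (x ^ c) (y ^ c) := hcop.pow
  rw [← hpow, isCoprime_self] at h
  exact (isUnit_pow_iff hc).1 h

theorem two_eq_zero_of_algebra_zmod_two_s19 [Algebra (ZMod 2) B] : (2 : B) = 0 := by
  rw [← map_ofNat (algebraMap (ZMod 2) B) 2, show (OfNat.ofNat 2 : ZMod 2) = 0 from rfl, map_zero]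

theorem bb_relations_iff [Algebra (ZMod 2) B] (u v : Bˣ) (c : ℕ) :
    (1 + (u : B) + ((u ^ (-(c : ℤ)) * v ^ ((c : ℤ) + 1) : Bˣ) : B) = 0 ∧
      1 + (v : B) + ((u ^ ((c : ℤ) + 1) * v ^ (-(c : ℤ)) : Bˣ) : B) = 0) ↔
    (v : B) = 1 + u ∧ (u : B) ^ c = (v : B) ^ c := by
  have h2 : (2 : B) = 0 := two_eq_zero_of_algebra_zmod_two_s19
  have hu : (u : B) ^ c * (↑u⁻¹ : B) ^ c = 1 := by simp [← mul_pow]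
  have hv : (v : B) ^ c * (↑v⁻¹ : B) ^ c = 1 := by simp [← mul_pow]
  have hf : ((u ^ (-(c : ℤ)) * v ^ ((c : ℤ) + 1) : Bˣ) : B) =
      (↑u⁻¹ : B) ^ c * ((v : B) ^ c * v) := by
    rw [zpow_neg, ← inv_zpow, zpow_add_one]; norm_cast
  have hg : ((u ^ ((c : ℤ) + 1) * v ^ (-(c : ℤ)) : Bˣ) : B) =
      ((u : B) ^ c * u) * (↑v⁻¹ : B) ^ c := by
    rw [zpow_neg, ← inv_zpow, zpow_add_one]; norm_cast
  rw [hf, hg]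
  generalize (u : B) ^ c = U at *
  generalize (v : B) ^ c = V at *
  generalize (↑u⁻¹ : B) ^ c = U' at *
  generalize (↑v⁻¹ : B) ^ c = V' at *
  constructor
  · rintro ⟨h₁, h₂⟩
    have hUV : U = V := by
      linear_combination U * h₁ + V * h₂ - V * v * hu - U * u * hv -
        (V + V * v + U * u) * h2
    subst hUV
    exact ⟨by linear_combination h₁ - v * hu - (1 + (u : B)) * h2, rfl⟩
  · rintro ⟨h, rfl⟩
    constructor
    · linear_combination h + v * hu + (1 + (u : B)) * h2
    · linear_combination h + u * hv + (1 + (u : B)) * h2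

end Units

namespace LaurentR

theorem mono_zero_zero : mono 0 0 = 1 := rfl

theorem mono_add (i j k l : ℤ) : mono (i + k) (j + l) = mono i j * mono k l := by
  simp [mono, AddMonoidAlgebra.single_mul_single]

/-- The unit `x` of the Laurent polynomial ring. -/
def unitX : LaurentRˣ where
  val := mono 1 0
  inv := mono (-1) 0
  val_inv := by rw [← mono_add]; exact mono_zero_zero
  inv_val := by rw [← mono_add]; exact mono_zero_zero

/-- The unit `y` of the Laurent polynomial ring. -/
def unitY : LaurentRˣ where
  val := mono 0 1
  inv := mono 0 (-1)
  val_inv := by rw [← mono_add]; exact mono_zero_zero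
  inv_val := by rw [← mono_add]; exact mono_zero_zero

theorem coe_unitX_zpow (i : ℤ) : ((unitX ^ i : LaurentRˣ) : LaurentR) = mono i 0 := by
  induction i with
  | zero => rw [zpow_zero, Units.val_one, mono_zero_zero]
  | succ n ih =>
    rw [zpow_add_one, Units.val_mul, ih]
    exact (mono_add n 0 1 0).symm
  | pred n ih =>
    rw [zpow_sub_one, Units.val_mul, ih]
    exact (mono_add (-n) 0 (-1) 0).symm

theorem coe_unitY_zpow (j : ℤ) : ((unitY ^ j : LaurentRˣ) : LaurentR) = mono 0 j := by
  induction j with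
  | zero => rw [zpow_zero, Units.val_one, mono_zero_zero]
  | succ n ih =>
    rw [zpow_add_one, Units.val_mul, ih]
    exact (mono_add 0 n 0 1).symm
  | pred n ih =>
    rw [zpow_sub_one, Units.val_mul, ih]
    exact (mono_add 0 (-n) 0 (-1)).symm

theorem mono_eq_coe (i j : ℤ) : mono i j = ((unitX ^ i * unitY ^ j : LaurentRˣ) : LaurentR) := by
  rw [Units.val_mul, coe_unitX_zpow, coe_unitY_zpow, ← mono_add, add_zero, zero_add]

variable {B : Type*} [CommRing B] [Algebra (ZMod 2) B]

theorem map_mono (φ : LaurentR →ₐ[ZMod 2] B) {u v : Bˣ} (hu : φ (mono 1 0) = u)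
    (hv : φ (mono 0 1) = v) (i j : ℤ) : φ (mono i j) = ((u ^ i * v ^ j : Bˣ) : B) := by
  have hX : Units.map (φ : LaurentR →* B) unitX = u := Units.ext hu
  have hY : Units.map (φ : LaurentR →* B) unitY = v := Units.ext hv
  rw [mono_eq_coe, ← hX, ← hY, ← map_zpow, ← map_zpow, ← map_mul]
  rfl

theorem algHom_ext_mono {φ ψ : LaurentR →ₐ[ZMod 2] B} (hX : φ (mono 1 0) = ψ (mono 1 0))
    (hY : φ (mono 0 1) = ψ (mono 0 1)) : φ = ψ := by
  refine AddMonoidAlgebra.algHom_ext (fun m => ?_) (by ext)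
  exact (map_mono φ (u := Units.map (ψ : LaurentR →* B) unitX)
    (v := Units.map (ψ : LaurentR →* B) unitY) hX hY m.1 m.2).trans
      (map_mono ψ rfl rfl m.1 m.2).symm

/-- Evaluation of Laurent polynomials at a pair of units. -/
def evalUnits (u v : Bˣ) : LaurentR →ₐ[ZMod 2] B :=
  AddMonoidAlgebra.lift (ZMod 2) B (ℤ × ℤ)
    { toFun := fun m => ((u ^ m.toAdd.1 * v ^ m.toAdd.2 : Bˣ) : B)
      map_one' := by simp
      map_mul' := fun m n => by
        rw [← Units.val_mul, toAdd_mul, Prod.fst_add, Prod.snd_add, zpow_add, zpow_add,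
          mul_mul_mul_comm] }

theorem evalUnits_mono (u v : Bˣ) (i j : ℤ) :
    evalUnits u v (mono i j) = ((u ^ i * v ^ j : Bˣ) : B) := by
  simp [evalUnits, mono]

/-- The ideal generated by the two BB polynomials of BB(c̄, c̄, c+1, c+1). -/
abbrev bbIdeal (c : ℕ) : Ideal LaurentR :=
  Ideal.span {1 + mono 1 0 + mono (-(c : ℤ)) ((c : ℤ) + 1),
    1 + mono 0 1 + mono ((c : ℤ) + 1) (-(c : ℤ))}

theorem bbIdeal_le_ker_iff (c : ℕ) (φ : LaurentR →ₐ[ZMod 2] B) :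
    (∀ a ∈ bbIdeal c, φ a = 0) ↔ φ (mono 0 1) = 1 + φ (mono 1 0) ∧
      φ (mono 1 0) ^ c = φ (mono 0 1) ^ c := by
  have h := bb_relations_iff (Units.map (φ : LaurentR →* B) unitX)
    (Units.map (φ : LaurentR →* B) unitY) c
  rw [← map_mono φ rfl rfl, ← map_mono φ rfl rfl] at h
  refine Iff.trans ?_ h
  change bbIdeal c ≤ RingHom.ker φ ↔ _
  rw [Ideal.span_le, Set.insert_subset_iff, Set.singleton_subset_iff]
  simp only [SetLike.mem_coe, RingHom.mem_ker, map_add, map_one]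
  rfl

/-- Eliminating `y = 1 + x` identifies the quotient by the BB ideal with
`F₂[X] ⧸ (X ^ c + (1 + X) ^ c)`, where `X` and `1 + X` are automatically invertible. -/
theorem nonempty_quotient_bbIdeal_algEquiv {c : ℕ} (hc : c ≠ 0) :
    Nonempty ((LaurentR ⧸ bbIdeal c) ≃ₐ[ZMod 2]
      ((ZMod 2)[X] ⧸ Ideal.span {(X ^ c + (1 + X) ^ c : (ZMod 2)[X])})) := by
  set P : (ZMod 2)[X] := X ^ c + (1 + X) ^ c with hP
  let π := Ideal.Quotient.mkₐ (ZMod 2) (Ideal.span {P})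
  let ρ := Ideal.Quotient.mkₐ (ZMod 2) (bbIdeal c)
  have hadd : π X + π (1 + X) = 1 := by
    rw [← map_add, ← map_one π, add_left_comm, CharTwo.add_self_eq_zero, add_zero]
  have hpow : π X ^ c = π (1 + X) ^ c := by
    rw [← map_pow, ← map_pow]
    refine Ideal.Quotient.eq.2 ?_
    rw [CharTwo.sub_eq_add]
    exact Ideal.mem_span_singleton_self P
  obtain ⟨u, hu⟩ := isUnit_left_of_add_eq_one_of_pow_eq_pow hc hadd hpow
  obtain ⟨v, hv⟩ := isUnit_left_of_add_eq_one_of_pow_eq_pow hc ((add_comm _ _).trans hadd) hpow.symm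
  have hx : evalUnits u v (mono 1 0) = π X := by simp [evalUnits_mono, hu]
  have hy : evalUnits u v (mono 0 1) = π (1 + X) := by simp [evalUnits_mono, hv]
  obtain ⟨hρy, hρpow⟩ := (bbIdeal_le_ker_iff c ρ).1 fun a ha => Ideal.Quotient.eq_zero_iff_mem.2 ha
  have hle : Ideal.span {P} ≤ RingHom.ker (aeval (R := ZMod 2) (ρ (mono 1 0))) := by
    rw [Ideal.span_le, Set.singleton_subset_iff, SetLike.mem_coe, RingHom.mem_ker]
    simp only [hP, map_add, map_pow, map_one, aeval_X]
    rw [← hρy, ← hρpow, ← two_mul, two_eq_zero_of_algebra_zmod_two_s19, zero_mul]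
  let F : (LaurentR ⧸ bbIdeal c) →ₐ[ZMod 2] ((ZMod 2)[X] ⧸ Ideal.span {P}) :=
    Ideal.Quotient.liftₐ (bbIdeal c) (evalUnits u v)
      ((bbIdeal_le_ker_iff c _).2 ⟨by rw [hx, hy, map_add, map_one], by rw [hx, hy, hpow]⟩)
  let G : ((ZMod 2)[X] ⧸ Ideal.span {P}) →ₐ[ZMod 2] (LaurentR ⧸ bbIdeal c) :=
    Ideal.Quotient.liftₐ (Ideal.span {P}) (aeval (ρ (mono 1 0))) fun a ha => hle ha
  have hF (a : LaurentR) : F (ρ a) = evalUnits u v a := rfl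
  have hG (p : (ZMod 2)[X]) : G (π p) = aeval (ρ (mono 1 0)) p := rfl
  refine ⟨AlgEquiv.ofAlgHom F G ?_ ?_⟩
  · refine Ideal.Quotient.algHom_ext _ (Polynomial.algHom_ext ?_)
    change F (G (π X)) = π X
    rw [hG, aeval_X, hF, hx]
  · refine Ideal.Quotient.algHom_ext _ (algHom_ext_mono ?_ ?_)
    · change G (F (ρ (mono 1 0))) = ρ (mono 1 0)
      rw [hF, hx, hG, aeval_X]
    · change G (F (ρ (mono 0 1))) = ρ (mono 0 1)
      rw [hF, hy, hG, map_add, map_one, aeval_X, hρy]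

theorem finrank_quotient_bbIdeal {c : ℕ} (hc : 0 < c) :
    Module.finrank (ZMod 2) (LaurentR ⧸ bbIdeal c) = c - 2 ^ c.factorization 2 := by
  obtain ⟨e⟩ := nonempty_quotient_bbIdeal_algEquiv hc.ne'
  rw [e.toLinearEquiv.finrank_eq, finrank_quotient_span_eq_natDegree,
    natDegree_X_pow_add_one_add_X_pow hc]

end LaurentR

/-- For the BB(c̄, c̄, c+1, c+1) code, with `f = 1 + x + x^{-c} y^{c+1}` and
`g = 1 + y + y^{-c} x^{c+1}`, the topological index is `Q = c − p₂(c)`, where `p₂(c)` is the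
largest power of `2` dividing `c`; in particular `Q = 0` whenever `c` is a power of `2`. -/
theorem bb_diagonal_topological_index (c : ℕ) (hc : 0 < c) :
    Module.finrank (ZMod 2)
      (LaurentR ⧸ Ideal.span ({1 + mono 1 0 + mono (-(c : ℤ)) ((c : ℤ) + 1),
        1 + mono 0 1 + mono ((c : ℤ) + 1) (-(c : ℤ))} : Set LaurentR)) =
      c - 2 ^ (Nat.factorization c 2) ∧
    (∀ k : ℕ, c = 2 ^ k →
      Module.finrank (ZMod 2)
        (LaurentR ⧸ Ideal.span ({1 + mono 1 0 + mono (-(c : ℤ)) ((c : ℤ) + 1),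
          1 + mono 0 1 + mono ((c : ℤ) + 1) (-(c : ℤ))} : Set LaurentR)) = 0) := by
  refine ⟨LaurentR.finrank_quotient_bbIdeal hc, ?_⟩
  rintro k rfl
  rw [LaurentR.finrank_quotient_bbIdeal hc, Nat.Prime.factorization_pow Nat.prime_two]
  simp
end
end
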